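/- arXiv:1008.3097 — 3 statements merged into one kernel-verified Lean document; each statement's English description precedes it below -/
import Mathlib

section
/- Let ε ∈ (0,1) satisfy condition (★). Let A : (0, 2π²) → (0, ∞) be a continuous function with the following barrier property: for every s₀ ∈ (0, 2π²) there exist δ > 0 and a twice continuously differentiable function u : (s₀−δ, s₀+δ) → (0, ∞) such that u(s₀) = A(s₀), u(s) ≥ A(s) for all s ∈ (s₀−δ, s₀+δ), and u''(s₀) ≤ min{ 4π/u(s₀)² − 3u'(s₀)²/(4u(s₀)) − 3/u(s₀), −u'(s₀)²/(2u(s₀)) − 2ε/u(s₀) }. Let f : (−π², π²) → (0, (4π)^{3/2}] be any twice continuously differentiable function with f''(s) = min{ (36π − f'(s)²)/(6 f(s)) − (9/2) f(s)^{−1/3}, −3ε f(s)^{−1/3} }, f(0) = (4π)^{3/2}, f'(0) = 0, and f(s) → 0 as s → ±π². Then A(s)^{3/2} ≥ f(s − π²) for all s ∈ (0, 2π²). -/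
open Real MeasureTheory Set Filter

/-- Condition (★). -/
def CondStar (ε : ℝ) : Prop :=
  ∀ y z : ℝ, z ∈ Set.Ico (4 * π / (3 - 2 * ε)) (4 * π) →
    2 * (1 - ε) * y = z ^ (1/2 : ℝ) * (4 * π - z) →
    (∫ x in (0:ℝ)..y,
        (36 * π - 27 * (1 - ε) * y ^ (2/3 : ℝ) - 9 * ε * x ^ (2/3 : ℝ)) ^ (-(1/2) : ℝ)) +
    (∫ x in y..(z ^ (3/2 : ℝ)),
        (36 * π - 18 * (1 - ε) * y * x ^ (-(1/3) : ℝ) - 9 * x ^ (2/3 : ℝ)) ^ (-(1/2) : ℝ))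
      < π ^ 2
open Topology

def Bar (ε : ℝ) (F : ℝ → ℝ) (s₀ : ℝ) : Prop :=
  ∃ (v v1 : ℝ → ℝ) (v2 : ℝ), (∀ᶠ s in 𝓝 s₀, HasDerivAt v (v1 s) s) ∧ HasDerivAt v1 v2 s₀ ∧
    v s₀ = F s₀ ∧ (∀ᶠ s in 𝓝 s₀, F s ≤ v s) ∧
    v2 ≤ (36 * π - (v1 s₀) ^ 2) / (6 * F s₀) - (9/2) * (F s₀) ^ (-(1/3) : ℝ) ∧
    v2 ≤ -3 * ε * (F s₀) ^ (-(1/3) : ℝ)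

lemma second_deriv_aux {φ φ1 : ℝ → ℝ} {φ2 s₀ : ℝ}
    (h1 : ∀ᶠ s in 𝓝 s₀, HasDerivAt φ (φ1 s) s) (h2 : HasDerivAt φ1 φ2 s₀)
    (hmin : IsLocalMin φ s₀) (hneg : φ2 < 0) : False := by
  have e1 : deriv φ =ᶠ[𝓝 s₀] φ1 := h1.mono fun s hs => hs.deriv
  have hdd : deriv (deriv φ) s₀ = φ2 := by rw [e1.deriv_eq]; exact h2.deriv
  have hmax : IsLocalMax φ s₀ :=
    isLocalMax_of_deriv_deriv_neg (by rw [hdd]; exact hneg) hmin.deriv_eq_zero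
      h1.self_of_nhds.continuousAt
  have hc : φ =ᶠ[𝓝 s₀] fun _ => φ s₀ := by
    filter_upwards [hmin, hmax] with s a b using le_antisymm b a
  have hd := hc.deriv
  have : deriv (deriv φ) s₀ = 0 := by
    rw [hd.deriv_eq]; simp
  rw [hdd] at this
  linarith

lemma Bar.reflect {ε : ℝ} {F : ℝ → ℝ} {c s₀ : ℝ} (h : Bar ε F (c - s₀)) :
    Bar ε (fun s => F (c - s)) s₀ := by
  obtain ⟨v, v1, v2, h1, h2, h3, h4, h5, h6⟩ := h
  have ht : Tendsto (fun s : ℝ => c - s) (𝓝 s₀) (𝓝 (c - s₀)) :=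
    (continuous_const.sub continuous_id).tendsto s₀
  have hd : ∀ s : ℝ, HasDerivAt (fun s : ℝ => c - s) (-1) s := fun s => by
    simpa using (hasDerivAt_id s).const_sub c
  refine ⟨fun s => v (c - s), fun s => - v1 (c - s), v2, ?_, ?_, h3, ht.eventually h4, ?_, h6⟩
  · filter_upwards [ht.eventually h1] with s hs
    have := HasDerivAt.comp s hs (hd s)
    simpa [Function.comp_def] using this
  · have := (HasDerivAt.comp s₀ h2 (hd s₀)).fun_neg
    simpa [Function.comp_def] using this
  · simpa using h5

/-- no interior local min after subtracting a linear function -/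
lemma Bar.no_min {ε : ℝ} (hε : 0 < ε) {F : ℝ → ℝ} {s₀ k : ℝ} (h : Bar ε F s₀) (hF : 0 < F s₀)
    (hm : IsLocalMin (fun s => F s - k * s) s₀) : False := by
  obtain ⟨v, v1, v2, h1, h2, h3, h4, h5, h6⟩ := h
  have hneg : v2 < 0 := by
    have : 0 < (F s₀) ^ (-(1/3) : ℝ) := Real.rpow_pos_of_pos hF _
    nlinarith [mul_pos hε this]
  refine second_deriv_aux (φ := fun s => v s - k * s) (φ1 := fun s => v1 s - k) (φ2 := v2)
    (s₀ := s₀) ?_ ?_ ?_ hneg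
  · filter_upwards [h1] with s hs
    simpa using hs.fun_sub ((hasDerivAt_id s).const_mul k)
  · simpa using h2.sub_const k
  · have : ∀ᶠ s in 𝓝 s₀, F s₀ - k * s₀ ≤ F s - k * s := hm
    change ∀ᶠ s in 𝓝 s₀, v s₀ - k * s₀ ≤ v s - k * s
    filter_upwards [this, h4] with s a b
    linarith

lemma strict_quasi {g : ℝ → ℝ} {a c d : ℝ} (hac : a < c) (hcd : c < d)
    (hg : ContinuousOn g (Icc a d)) (hno : ∀ s ∈ Ioo a d, ¬ IsLocalMin g s) :
    min (g a) (g d) < g c := by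
  by_contra hcon
  push Not at hcon
  obtain ⟨ha, hd⟩ := le_min_iff.1 hcon
  obtain ⟨m, hm, hmin⟩ := isCompact_Icc.exists_isMinOn (nonempty_Icc.2 (hac.trans hcd).le) hg
  have key : ∀ p ∈ Ioo a d, (∀ s ∈ Icc a d, g p ≤ g s) → False := fun p hp hs =>
    hno p hp (by
      filter_upwards [Icc_mem_nhds hp.1 hp.2] with s h using hs s h)
  have hmin' : ∀ s ∈ Icc a d, g m ≤ g s := fun s hs => hmin hs
  rcases eq_or_lt_of_le hm.1 with e | e
  · exact key c ⟨hac, hcd⟩ fun s hs => ha.trans (by rw [e]; exact hmin' s hs)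
  rcases eq_or_lt_of_le hm.2 with e' | e'
  · exact key c ⟨hac, hcd⟩ fun s hs => hd.trans (by rw [← e']; exact hmin' s hs)
  exact key m ⟨e, e'⟩ hmin'

lemma concave_of_bar {ε : ℝ} (hε : 0 < ε) {F : ℝ → ℝ} {L : ℝ}
    (hpos : ∀ s ∈ Ioo 0 L, 0 < F s) (hc : ContinuousOn F (Ioo 0 L))
    (hb : ∀ s ∈ Ioo 0 L, Bar ε F s) {a c d : ℝ} (ha : 0 < a) (hac : a < c) (hcd : c < d)
    (hd : d < L) : (F d - F c) / (d - c) < (F c - F a) / (c - a) := by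
  set k := (F d - F a) / (d - a) with hk
  have hsub : Icc a d ⊆ Ioo 0 L := fun s hs => ⟨ha.trans_le hs.1, hs.2.trans_lt hd⟩
  have := strict_quasi (g := fun s => F s - k * s) hac hcd
    ((hc.mono hsub).sub (by fun_prop)) (fun s hs hm =>
      (hb s (hsub ⟨hs.1.le, hs.2.le⟩)).no_min hε (hpos s (hsub ⟨hs.1.le, hs.2.le⟩)) hm)
  have hda : 0 < d - a := by linarith
  have hkk : k * (d - a) = F d - F a := by rw [hk]; field_simp
  have e : F a - k * a = F d - k * d := by linarith
  simp only [e, min_self] at this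
  have hh : F a + k * (c - a) < F c := by linarith
  have h1 : k < (F c - F a) / (c - a) := by
    rw [lt_div_iff₀ (by linarith)]; linarith
  have h2 : (F d - F c) / (d - c) < k := by
    rw [div_lt_iff₀ (by linarith)]; linarith
  linarith

structure Asc (ε : ℝ) (F : ℝ → ℝ) (b : ℝ) : Prop where
  pos : ∀ s ∈ Ioc 0 b, 0 < F s
  cont : ContinuousOn F (Ioc 0 b)
  mono : StrictMonoOn F (Ioc 0 b)
  conc : ∀ a c d, 0 < a → a < c → c < d → d ≤ b →
    (F d - F c) / (d - c) < (F c - F a) / (c - a)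
  bar : ∀ s ∈ Ioo 0 b, Bar ε F s

lemma local_step {ε : ℝ} {F V V' T : ℝ → ℝ} {p q s₀ M : ℝ} (hbar : Bar ε F s₀) 
    (hp0 : 0 ≤ p) (hqM : q ≤ M)
    (hFs : F s₀ ∈ Ioo p q) (hFc : ContinuousAt F s₀)
    (hV : ∀ x ∈ Ioo 0 M, HasDerivAt V (V' x) x)
    (hVpos : ∀ x ∈ Ioo p q, 0 < V x)
    (hT : ∀ x ∈ Ioo p q, HasDerivAt T ((V x) ^ (-(1/2) : ℝ)) x)
    (hs : -6 * ε * (F s₀) ^ (-(1/3) : ℝ) < V' (F s₀) ∨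
      (36 * π - V (F s₀)) / (3 * F s₀) - 9 * (F s₀) ^ (-(1/3) : ℝ) < V' (F s₀))
    (hmin : IsLocalMin (fun s => T (F s) - s) s₀) : False := by
  obtain ⟨v, v1, v2, h1, h2, h3, h4, h5, h6⟩ := hbar
  have hTm : MonotoneOn T (Ioo p q) := by
    apply monotoneOn_of_deriv_nonneg (convex_Ioo p q)
    · exact fun x hx => (hT x hx).continuousAt.continuousWithinAt
    · rw [interior_Ioo]
      exact fun x hx => (hT x hx).differentiableAt.differentiableWithinAt
    · rw [interior_Ioo]
      intro x hx
      rw [(hT x hx).deriv]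
      exact (Real.rpow_pos_of_pos (hVpos x hx) _).le
  have hv0 : v s₀ ∈ Ioo p q := by rw [h3]; exact hFs
  have hvc : ContinuousAt v s₀ := h1.self_of_nhds.continuousAt
  have hvnear : ∀ᶠ s in 𝓝 s₀, v s ∈ Ioo p q := hvc (Ioo_mem_nhds hv0.1 hv0.2)
  have hFnear : ∀ᶠ s in 𝓝 s₀, F s ∈ Ioo p q := hFc (Ioo_mem_nhds hFs.1 hFs.2)
  have hφ1 : ∀ᶠ s in 𝓝 s₀, HasDerivAt (fun s => T (v s) - s)
      ((V (v s)) ^ (-(1/2) : ℝ) * v1 s - 1) s := by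
    filter_upwards [h1, hvnear] with s a b
    have := HasDerivAt.comp s (hT _ b) a
    exact this.fun_sub (hasDerivAt_id' s)
  have hφmin : IsLocalMin (fun s => T (v s) - s) s₀ := by
    have hm : ∀ᶠ s in 𝓝 s₀, T (F s₀) - s₀ ≤ T (F s) - s := hmin
    change ∀ᶠ s in 𝓝 s₀, T (v s₀) - s₀ ≤ T (v s) - s
    filter_upwards [hm, h4, hvnear, hFnear] with s a b c d
    have := hTm d c b
    rw [h3]; linarith
  have hz : (V (v s₀)) ^ (-(1/2) : ℝ) * v1 s₀ - 1 = 0 := by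
    rw [← hφ1.self_of_nhds.deriv]; exact hφmin.deriv_eq_zero
  have hx : F s₀ ∈ Ioo 0 M := ⟨hp0.trans_lt hFs.1, hFs.2.trans_le hqM⟩
  have hVx := hVpos _ hFs
  have hφ2 : HasDerivAt (fun s => (V (v s)) ^ (-(1/2) : ℝ) * v1 s - 1)
      (((V' (F s₀) * v1 s₀) * (-(1/2) : ℝ) * (V (F s₀)) ^ (-(1/2) - 1 : ℝ)) * v1 s₀ +
        (V (F s₀)) ^ (-(1/2) : ℝ) * v2) s₀ := by
    have hVd : HasDerivAt V (V' (F s₀)) (v s₀) := by rw [h3]; exact hV _ hx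
    have a := HasDerivAt.comp s₀ hVd h1.self_of_nhds
    have c := a.rpow_const (p := (-(1/2) : ℝ)) (Or.inl (by simp only [Function.comp, h3]; exact hVx.ne'))
    have d := (c.fun_mul h2).sub_const 1
    simp only [Function.comp, h3] at d
    convert d using 1
  refine second_deriv_aux hφ1 hφ2 hφmin ?_
  rw [h3] at hz
  set W := V (F s₀) with hW
  set r := W ^ (-(1/2) : ℝ) with hr
  have hrpos : 0 < r := Real.rpow_pos_of_pos hVx _
  have hr2 : r ^ 2 * W = 1 := by
    rw [hr, ← Real.rpow_natCast, ← Real.rpow_mul hVx.le]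
    norm_num
    rw [Real.rpow_neg_one]; field_simp
  have hr3 : W ^ (-(1/2) - 1 : ℝ) = r * r ^ 2 := by
    rw [hr, ← Real.rpow_natCast, ← Real.rpow_mul hVx.le, ← Real.rpow_add hVx]
    norm_num
  have hv1 : r * v1 s₀ = 1 := by linarith
  have hv1sq : (v1 s₀) ^ 2 = W := by
    have : (r * v1 s₀) ^ 2 = 1 := by rw [hv1]; norm_num
    have h' : r ^ 2 * (v1 s₀ ^ 2 - W) = 0 := by linear_combination this - hr2
    rcases mul_eq_zero.1 h' with h | h
    · exact absurd h (by positivity)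
    · linarith
  rw [hv1sq] at h5
  have hlt : v2 < V' (F s₀) / 2 := by
    rcases hs with hs | hs
    · linarith
    · have : (36 * π - W) / (6 * F s₀) = (36 * π - W) / (3 * F s₀) / 2 := by
        rw [div_div]; congr 1; ring
      linarith
  rw [hr3]
  have : (V' (F s₀) * v1 s₀ * (-(1/2)) * (r * r ^ 2)) * v1 s₀ + r * v2
      = r * (v2 - V' (F s₀) / 2) := by
    linear_combination (-(1/2) * V' (F s₀) * r * (r * v1 s₀ + 1)) * hv1
  rw [this]
  nlinarith

lemma phase_strict {ε : ℝ} {F V V' : ℝ → ℝ} {b : ℝ} (hF : Asc ε F b)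
    (hV : ∀ x ∈ Ioo 0 (F b), HasDerivAt V (V' x) x)
    (hVc : ContinuousOn V (Ioc 0 (F b))) (hVb : V (F b) < 0)
    (hs : ∀ x ∈ Ioo 0 (F b), -6 * ε * x ^ (-(1/3) : ℝ) < V' x ∨
      (36 * π - V x) / (3 * x) - 9 * x ^ (-(1/3) : ℝ) < V' x)
    {t1 t2 : ℝ} (ht1 : 0 < t1) (ht : t1 < t2) (ht2 : t2 < b)
    (hpos : ∀ x ∈ Icc (F t1) (F t2), 0 < V x) :
    t2 - t1 ≤ ∫ x in (F t1)..(F t2), (V x) ^ (-(1/2) : ℝ) := by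
  have m1 : t1 ∈ Ioc 0 b := ⟨ht1, (ht.trans ht2).le⟩
  have m2 : t2 ∈ Ioc 0 b := ⟨ht1.trans ht, ht2.le⟩
  have mb : b ∈ Ioc 0 b := ⟨(ht1.trans ht).trans ht2, le_rfl⟩
  have F12 : F t1 < F t2 := hF.mono m1 m2 ht
  have F2b : F t2 < F b := hF.mono m2 mb ht2
  have F1pos := hF.pos t1 m1
  have hVc2 : ContinuousOn V (Icc (F t1) (F b)) :=
    hVc.mono fun x hx => ⟨F1pos.trans_le hx.1, hx.2⟩
  -- M1
  obtain ⟨M1, hM1, hVM1⟩ : ∃ M1 ∈ Ioo (F t2) (F b), V M1 < 0 := by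
    have h : ∀ᶠ x in 𝓝[Icc (F t1) (F b)] (F b), V x < 0 :=
      (hVc2 (F b) ⟨(F12.trans F2b).le, le_rfl⟩).eventually (gt_mem_nhds hVb)
    have h2 : ∀ᶠ x in 𝓝[<] (F b), V x < 0 := by
      have : 𝓝[<] (F b) ≤ 𝓝[Icc (F t1) (F b)] (F b) := by
        rw [← nhdsWithin_Ioo_eq_nhdsLT (F12.trans F2b)]
        exact nhdsWithin_mono _ Ioo_subset_Icc_self
      exact this h
    obtain ⟨x, hx, hx'⟩ := (h2.and (Ioo_mem_nhdsLT F2b)).exists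
    exact ⟨x, hx', hx⟩
  -- x'
  obtain ⟨x', hx', hVx', hVlt⟩ : ∃ x' ∈ Ioc (F t2) M1, V x' ≤ 0 ∧
      ∀ x ∈ Ico (F t1) x', 0 < V x := by
    have hcl : IsCompact {x ∈ Icc (F t2) M1 | V x ≤ 0} := by
      have hc : ContinuousOn V (Icc (F t2) M1) :=
        hVc2.mono (Icc_subset_Icc F12.le hM1.2.le)
      exact isCompact_Icc.of_isClosed_subset
        (hc.preimage_isClosed_of_isClosed isClosed_Icc isClosed_Iic) (fun x hx => hx.1)
    obtain ⟨x', hx'm, hl⟩ := hcl.exists_isLeast ⟨M1, ⟨hM1.1.le, le_rfl⟩, hVM1.le⟩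
    refine ⟨x', ⟨lt_of_le_of_ne hx'm.1.1 ?_, hx'm.1.2⟩, hx'm.2, ?_⟩
    · intro h
      have := hpos _ (right_mem_Icc.2 F12.le)
      rw [h] at this
      exact absurd hx'm.2 (not_le.2 this)
    · intro x hx
      rcases le_or_gt x (F t2) with h | h
      · exact hpos x ⟨hx.1, h⟩
      · by_contra hcon
        exact absurd (hl ⟨⟨h.le, hx.2.le.trans hx'm.1.2⟩, not_lt.1 hcon⟩) (not_le.2 hx.2)
  have hx'b : x' < F b := hx'.2.trans_lt hM1.2
  -- s'
  obtain ⟨s', hs', hFs'⟩ : ∃ s' ∈ Icc t2 b, F s' = x' :=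
    intermediate_value_Icc ht2.le (hF.cont.mono fun s h => ⟨m2.1.trans_le h.1, h.2⟩)
      ⟨hx'.1.le, hx'b.le⟩
  have hs2 : t2 < s' := lt_of_le_of_ne hs'.1 (by rintro rfl; exact absurd hFs' hx'.1.ne)
  have hsb : s' < b := lt_of_le_of_ne hs'.2 (by rintro rfl; exact absurd hFs' hx'b.ne')
  have ms : s' ∈ Ioc 0 b := ⟨m2.1.trans hs2, hsb.le⟩
  set Q : ℝ → ℝ := fun x => (V x) ^ (-(1/2) : ℝ) with hQ
  have hQc : ContinuousOn Q (Ico (F t1) x') := by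
    apply ContinuousOn.rpow_const
    · exact hVc2.mono fun x hx => ⟨hx.1, (hx.2.trans hx'b).le⟩
    · intro x hx; exact Or.inl (hVlt x hx).ne'
  have hQi : ∀ p q, p ∈ Ico (F t1) x' → q ∈ Ico (F t1) x' → IntervalIntegrable Q volume p q := by
    intro p q hp hq
    apply ContinuousOn.intervalIntegrable
    apply hQc.mono
    exact (ordConnected_Ico).uIcc_subset hp hq
  set T : ℝ → ℝ := fun x => ∫ y in (F t1)..x, Q y with hT
  have l1 : F t1 ∈ Ico (F t1) x' := ⟨le_rfl, F12.trans hx'.1⟩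
  have hTd : ∀ x ∈ Ioo (F t1) x', HasDerivAt T (Q x) x := by
    intro x hx
    have hnb : Ioo (F t1) x' ∈ 𝓝 x := Ioo_mem_nhds hx.1 hx.2
    apply intervalIntegral.integral_hasDerivAt_right (hQi _ _ l1 ⟨hx.1.le, hx.2⟩)
    · exact ContinuousOn.stronglyMeasurableAtFilter_nhdsWithin
        (hQc.mono Ioo_subset_Ico_self) measurableSet_Ioo x |> fun h => by
          rwa [isOpen_Ioo.nhdsWithin_eq hx] at h
    · exact (hQc.mono Ioo_subset_Ico_self).continuousAt hnb
  have hFm : ∀ s ∈ Ico t1 s', F s ∈ Ico (F t1) x' := by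
    intro s h
    have msx : s ∈ Ioc 0 b := ⟨ht1.trans_le h.1, (h.2.trans hsb).le⟩
    exact ⟨hF.mono.monotoneOn m1 msx h.1, hFs' ▸ hF.mono msx ms h.2⟩
  set w : ℝ → ℝ := fun s => T (F s) - s with hw
  have hdiff : ∀ r ∈ Ico t1 s', ∀ s ∈ Ico t1 s', T (F s) - T (F r) = ∫ x in (F r)..(F s), Q x := by
    intro r hr s hs
    exact intervalIntegral.integral_interval_sub_left (hQi _ _ l1 (hFm s hs))
      (hQi _ _ l1 (hFm r hr))
  have hwq : ∀ a c d, t1 ≤ a → a < c → c < d → d < s' → min (w a) (w d) < w c := by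
    intro a c d ha hac hcd hd
    apply strict_quasi hac hcd
    · apply ContinuousOn.sub _ continuousOn_id
      have hTc : ContinuousOn T (Icc (F t1) (F d)) := by
        have hle : F t1 ≤ F d := (hFm d ⟨by linarith, hd⟩).1
        have := intervalIntegral.continuousOn_primitive_interval (μ := volume) (f := Q)
          (a := F t1) (b := F d) (by
            rw [uIcc_of_le hle]
            exact (hQc.mono fun x hx => ⟨hx.1, hx.2.trans_lt (hFm d ⟨by linarith, hd⟩).2⟩).integrableOn_Icc)
        rwa [uIcc_of_le hle] at this
      apply hTc.comp (hF.cont.mono fun s h => ⟨by linarith [h.1], by linarith [h.2]⟩)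
      intro s h
      refine ⟨(hFm s ⟨by linarith [h.1], by linarith [h.2]⟩).1, ?_⟩
      exact hF.mono.monotoneOn ⟨by linarith [h.1], by linarith [h.2]⟩
        ⟨by linarith [h.1], by linarith⟩ h.2
    · intro s h hmin
      have msx : s ∈ Ioo 0 b := ⟨by linarith [h.1], by linarith [h.2]⟩
      have hFs : F s ∈ Ioo (F t1) x' :=
        ⟨hF.mono m1 ⟨msx.1, msx.2.le⟩ (by linarith [h.1]), (hFm s ⟨by linarith [h.1], by linarith [h.2]⟩).2⟩
      exact local_step (hF.bar s msx) F1pos.le hx'b.le hFs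
        (hF.cont.continuousAt (Ioc_mem_nhds msx.1 msx.2)) hV
        (fun x hx => hVlt x ⟨hx.1.le, hx.2⟩) hTd
        (hs _ ⟨F1pos.trans hFs.1, hFs.2.trans hx'b⟩) hmin
  by_contra hcon
  push Not at hcon
  have h12 : w t2 < w t1 := by
    have := hdiff t1 ⟨le_rfl, ht.trans hs2⟩ t2 ⟨ht.le, hs2⟩
    simp only [hw]; linarith
  have hle1 : ∀ r, t2 ≤ r → r < s' → w r < w t1 := by
    intro r hr hrs
    rcases eq_or_lt_of_le hr with rfl | hr
    · exact h12
    · have := hwq t1 t2 r le_rfl ht hr hrs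
      rcases min_lt_iff.1 this with h | h <;> linarith
  have hdec : ∀ r s, t2 ≤ r → r < s → s < s' → w s < w r := by
    intro r s hr hrs hs
    have := hwq t1 r s le_rfl (by linarith) hrs hs
    have h' := hle1 r hr (by linarith)
    rcases min_lt_iff.1 this with h | h <;> linarith
  set κ := (F b - F s') / (b - s') with hκ
  have hκpos : 0 < κ := div_pos (by linarith) (by linarith)
  -- Q large near x'
  have hVx'0 : ∀ᶠ x in 𝓝[<] x', V x < κ ^ 2 := by
    have hc : ContinuousWithinAt V (Icc (F t1) (F b)) x' :=
      hVc2 x' ⟨(F12.trans hx'.1).le, hx'b.le⟩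
    have : 𝓝[<] x' ≤ 𝓝[Icc (F t1) (F b)] x' := by
      rw [← nhdsWithin_Ioo_eq_nhdsLT (F12.trans hx'.1)]
      exact nhdsWithin_mono _ fun x hx => ⟨hx.1.le, (hx.2.trans hx'b).le⟩
    exact this (hc.eventually (gt_mem_nhds (by nlinarith)))
  obtain ⟨x1, hx1, hx1'⟩ := (mem_nhdsLT_iff_exists_Ioo_subset' hx'.1).1 hVx'0
  obtain ⟨r, hr, hFr⟩ : ∃ r ∈ Ioo t2 s', x1 < F r := by
    have hc : ContinuousAt F s' := hF.cont.continuousAt (Ioc_mem_nhds ms.1 hsb)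
    have h : ∀ᶠ s in 𝓝[<] s', x1 < F s :=
      nhdsWithin_le_nhds (hc.eventually (lt_mem_nhds (by rw [hFs']; exact hx1)))
    obtain ⟨r, h1, h2⟩ := (h.and (Ioo_mem_nhdsLT hs2)).exists
    exact ⟨r, h2, h1⟩
  obtain ⟨s, hrs, hss⟩ := exists_between hr.2
  have hwd := hdec r s hr.1.le hrs hss
  have hi := hdiff r ⟨by linarith [hr.1], hr.2⟩ s ⟨by linarith [hr.1], hss⟩
  have hlow : κ⁻¹ * (F s - F r) ≤ ∫ x in (F r)..(F s), Q x := by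
    have hFrs : F r < F s := hF.mono ⟨by linarith [hr.1], by linarith⟩ ⟨by linarith [hr.1], by linarith⟩ hrs
    have : ∫ x in (F r)..(F s), κ⁻¹ ≤ ∫ x in (F r)..(F s), Q x := by
      apply intervalIntegral.integral_mono_on hFrs.le (by simp)
      · exact hQi _ _ (hFm r ⟨by linarith [hr.1], hr.2⟩) (hFm s ⟨by linarith [hr.1], hss⟩)
      · intro x hx
        have hxm : x ∈ Ico (F t1) x' := ⟨(hFm r ⟨by linarith [hr.1], hr.2⟩).1.trans hx.1,
          hx.2.trans_lt (hFm s ⟨by linarith [hr.1], hss⟩).2⟩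
        have hVk : V x < κ ^ 2 := hx1' ⟨hFr.trans_le hx.1, hxm.2⟩
        have hVp := hVlt x hxm
        have : κ⁻¹ = (κ ^ 2) ^ (-(1/2) : ℝ) := by
          rw [← Real.rpow_natCast, ← Real.rpow_mul hκpos.le]
          norm_num
          rw [Real.rpow_neg_one]
        rw [this]
        exact Real.rpow_le_rpow_of_nonpos hVp hVk.le (by norm_num)
    simpa [mul_comm] using this
  have hsl1 := hF.conc r s s' (by linarith [hr.1]) hrs hss hsb.le
  have hsl2 := hF.conc s s' b (by linarith [hr.1]) hss hsb le_rfl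
  have hsl : κ < (F s - F r) / (s - r) := by linarith
  rw [lt_div_iff₀ (by linarith)] at hsl
  have : κ * (κ⁻¹ * (F s - F r)) < κ * (s - r) := by
    apply mul_lt_mul_of_pos_left _ hκpos
    simp only [hw] at hwd
    linarith
  rw [← mul_assoc, mul_inv_cancel₀ hκpos.ne'] at this
  linarith

lemma phase {ε : ℝ} {F W W' : ℝ → ℝ} {b : ℝ} (hF : Asc ε F b)
    (hW : ∀ x ∈ Ioo 0 (F b), HasDerivAt W (W' x) x)
    (hWc : ContinuousOn W (Ioc 0 (F b))) (hWb : W (F b) ≤ 0)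
    (hs : ∀ x ∈ Ioo 0 (F b), -6 * ε * x ^ (-(1/3) : ℝ) ≤ W' x ∨
      (36 * π - W x) / (3 * x) - 9 * x ^ (-(1/3) : ℝ) ≤ W' x)
    {t1 t2 : ℝ} (ht1 : 0 < t1) (ht : t1 < t2) (ht2 : t2 < b)
    (hpos : ∀ x ∈ Icc (F t1) (F t2), 0 < W x) :
    t2 - t1 ≤ ∫ x in (F t1)..(F t2), (W x) ^ (-(1/2) : ℝ) := by
  have m1 : t1 ∈ Ioc 0 b := ⟨ht1, (ht.trans ht2).le⟩
  have m2 : t2 ∈ Ioc 0 b := ⟨ht1.trans ht, ht2.le⟩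
  have mb : b ∈ Ioc 0 b := ⟨(ht1.trans ht).trans ht2, le_rfl⟩
  have F12 : F t1 < F t2 := hF.mono m1 m2 ht
  have F2b : F t2 < F b := hF.mono m2 mb ht2
  have F1pos := hF.pos t1 m1
  have Fbpos := hF.pos b mb
  set K := F b + 1 with hK
  set ψ : ℝ → ℝ := fun x => (K - x) * x ^ (-(1/3) : ℝ) with hψ
  set ψ' : ℝ → ℝ := fun x => -x ^ (-(1/3) : ℝ) + (K - x) * (-(1/3) * x ^ (-(1/3) - 1 : ℝ)) with hψ'
  have hψd : ∀ x, 0 < x → HasDerivAt ψ (ψ' x) x := by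
    intro x hx
    have h1 : HasDerivAt (fun x : ℝ => K - x) (-1) x := by
      simpa using (hasDerivAt_id x).const_sub K
    have h2 : HasDerivAt (fun x : ℝ => x ^ (-(1/3) : ℝ)) (-(1/3) * x ^ (-(1/3) - 1 : ℝ)) x :=
      Real.hasDerivAt_rpow_const (Or.inl hx.ne')
    have := h1.fun_mul h2
    have e : ψ' x = -1 * x ^ (-(1/3) : ℝ) + (K - x) * (-(1/3) * x ^ (-(1/3) - 1 : ℝ)) := by
      simp only [hψ']; ring
    rw [e]; exact this
  have hψc : ContinuousOn ψ (Ioi 0) := fun x hx => (hψd x hx).continuousAt.continuousWithinAt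
  have hψpos : ∀ x, 0 < x → x ≤ F b → 0 < ψ x := fun x h1 h2 =>
    mul_pos (by linarith) (Real.rpow_pos_of_pos h1 _)
  have hsubI : Icc (F t1) (F t2) ⊆ Ioc 0 (F b) :=
    fun x hx => ⟨F1pos.trans_le hx.1, hx.2.trans F2b.le⟩
  obtain ⟨C, hC0, hC⟩ : ∃ C > 0, ∀ x ∈ Icc (F t1) (F t2), ψ x ≤ C * W x := by
    have hc : ContinuousOn (fun x => ψ x / W x) (Icc (F t1) (F t2)) :=
      (hψc.mono fun x hx => F1pos.trans_le hx.1).div (hWc.mono hsubI) fun x hx => (hpos x hx).ne'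
    obtain ⟨C, hC⟩ := isCompact_Icc.bddAbove_image hc
    refine ⟨max C 1, by positivity, fun x hx => ?_⟩
    have h1 : ψ x / W x ≤ C := hC ⟨x, hx, rfl⟩
    have h2 : ψ x / W x ≤ max C 1 := h1.trans (le_max_left _ _)
    rwa [div_le_iff₀ (hpos x hx)] at h2
  set J := ∫ x in (F t1)..(F t2), (W x) ^ (-(1/2) : ℝ) with hJ
  have key : ∀ η ∈ Ioo 0 C⁻¹, t2 - t1 ≤ (1 - η * C) ^ (-(1/2) : ℝ) * J := by
    intro η hη
    have hηC : 0 < 1 - η * C := by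
      have := mul_lt_mul_of_pos_right hη.2 hC0
      rw [inv_mul_cancel₀ hC0.ne'] at this; linarith
    have hVl : ∀ x ∈ Icc (F t1) (F t2), (1 - η * C) * W x ≤ W x - η * ψ x := by
      intro x hx
      nlinarith [hC x hx, hη.1]
    have hVp : ∀ x ∈ Icc (F t1) (F t2), 0 < W x - η * ψ x := fun x hx =>
      lt_of_lt_of_le (mul_pos hηC (hpos x hx)) (hVl x hx)
    have hVc : ContinuousOn (fun x => W x - η * ψ x) (Ioc 0 (F b)) :=
      hWc.sub (continuousOn_const.mul (hψc.mono fun x hx => hx.1))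
    have h := phase_strict (V := fun x => W x - η * ψ x) (V' := fun x => W' x - η * ψ' x) hF
      (fun x hx => (hW x hx).fun_sub ((hψd x hx.1).const_mul η)) hVc
      (by
        have := mul_pos hη.1 (hψpos _ Fbpos le_rfl)
        linarith)
      (by
        intro x hx
        have hr : 0 < x ^ (-(1/3) : ℝ) := Real.rpow_pos_of_pos hx.1 _
        have hr' : x ^ (-(1/3) - 1 : ℝ) = x ^ (-(1/3) : ℝ) / x := Real.rpow_sub_one hx.1.ne' _
        have hKx : 0 < K - x := by have := hx.2; linarith
        have e : -ψ' x = ψ x / (3 * x) + x ^ (-(1/3) : ℝ) := by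
          simp only [hψ, hψ', hr']
          have := hx.1.ne'
          field_simp
          ring
        have hp : 0 < ψ x / (3 * x) := div_pos (hψpos x hx.1 hx.2.le) (by linarith [hx.1])
        rcases hs x hx with h | h
        · left
          nlinarith [hη.1]
        · right
          have e2 : (36 * π - (W x - η * ψ x)) / (3 * x) =
            (36 * π - W x) / (3 * x) + η * (ψ x / (3 * x)) := by
            ring
          simp only [e2]
          nlinarith [mul_pos hη.1 hr])
      ht1 ht ht2 hVp
    refine h.trans ?_
    rw [hJ, ← intervalIntegral.integral_const_mul]
    apply intervalIntegral.integral_mono_on F12.le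
    · apply ContinuousOn.intervalIntegrable_of_Icc F12.le
      exact (hVc.mono hsubI).rpow_const fun x hx => Or.inl (hVp x hx).ne'
    · apply ContinuousOn.intervalIntegrable_of_Icc F12.le
      exact continuousOn_const.mul ((hWc.mono hsubI).rpow_const fun x hx => Or.inl (hpos x hx).ne')
    · intro x hx
      rw [← Real.mul_rpow hηC.le (hpos x hx).le]
      exact Real.rpow_le_rpow_of_nonpos (mul_pos hηC (hpos x hx)) (hVl x hx) (by norm_num)
  have hlim : Tendsto (fun η : ℝ => (1 - η * C) ^ (-(1/2) : ℝ) * J) (𝓝[>] 0) (𝓝 J) := by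
    have : ContinuousAt (fun η : ℝ => (1 - η * C) ^ (-(1/2) : ℝ) * J) 0 := by
      apply ContinuousAt.mul _ continuousAt_const
      apply ContinuousAt.rpow_const (by fun_prop)
      left; norm_num
    have h := this.tendsto
    simp only [zero_mul, sub_zero, Real.one_rpow, one_mul] at h
    exact h.mono_left nhdsWithin_le_nhds
  apply ge_of_tendsto hlim
  filter_upwards [Ioo_mem_nhdsGT (inv_pos.2 hC0)] with η hη using key η hη

/-- phase integrated to the whole ascent -/
lemma phase_total {ε : ℝ} {F W W' : ℝ → ℝ} {b : ℝ} (hF : Asc ε F b)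
    (hW : ∀ x ∈ Ioo 0 (F b), HasDerivAt W (W' x) x)
    (hWc : ContinuousOn W (Ioc 0 (F b))) (hWb : W (F b) ≤ 0)
    (hs : ∀ x ∈ Ioo 0 (F b), -6 * ε * x ^ (-(1/3) : ℝ) ≤ W' x ∨
      (36 * π - W x) / (3 * x) - 9 * x ^ (-(1/3) : ℝ) ≤ W' x)
    {t X : ℝ} (ht0 : 0 < t) (htb : t < b) (hX : F t ≤ X)
    (hpos : ∀ x ∈ Ioc 0 (F t), 0 < W x)
    (hnn : ∀ x ∈ Ioo 0 X, 0 ≤ W x)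
    (hint : IntervalIntegrable (fun x => (W x) ^ (-(1/2) : ℝ)) volume 0 X) :
    t ≤ ∫ x in (0:ℝ)..X, (W x) ^ (-(1/2) : ℝ) := by
  have mt : t ∈ Ioc 0 b := ⟨ht0, htb.le⟩
  have hFt := hF.pos t mt
  have key : ∀ t1 ∈ Ioo 0 t, t - t1 ≤ ∫ x in (0:ℝ)..X, (W x) ^ (-(1/2) : ℝ) := by
    intro t1 ht1
    have m1 : t1 ∈ Ioc 0 b := ⟨ht1.1, (ht1.2.trans htb).le⟩
    have hF1 := hF.pos t1 m1
    refine (phase hF hW hWc hWb hs ht1.1 ht1.2 htb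
      fun x hx => hpos x ⟨hF1.trans_le hx.1, hx.2⟩).trans ?_
    have hle := (hF.mono m1 mt ht1.2).le
    apply intervalIntegral.integral_mono_interval hF1.le hle hX _ hint
    rw [EventuallyLE, ae_restrict_iff' measurableSet_Ioc]
    have hne : ∀ᵐ x : ℝ, x ≠ X := by simp [ae_iff]
    filter_upwards [hne] with x hx hm
    exact Real.rpow_nonneg (hnn x ⟨hm.1, lt_of_le_of_ne hm.2 hx⟩) _
  have hlim : Tendsto (fun t1 : ℝ => t - t1) (𝓝[>] 0) (𝓝 t) := by
    have : ContinuousAt (fun t1 : ℝ => t - t1) 0 := by fun_prop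
    have h := this.tendsto
    simp only [sub_zero] at h
    exact h.mono_left nhdsWithin_le_nhds
  apply le_of_tendsto hlim
  filter_upwards [Ioo_mem_nhdsGT ht0] with η hη using key η hη

lemma phase_b {ε : ℝ} {F W W' : ℝ → ℝ} {b : ℝ} (hb : 0 < b) (hF : Asc ε F b)
    (hW : ∀ x ∈ Ioo 0 (F b), HasDerivAt W (W' x) x)
    (hWc : ContinuousOn W (Ioc 0 (F b))) (hWb : W (F b) ≤ 0)
    (hs : ∀ x ∈ Ioo 0 (F b), -6 * ε * x ^ (-(1/3) : ℝ) ≤ W' x ∨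
      (36 * π - W x) / (3 * x) - 9 * x ^ (-(1/3) : ℝ) ≤ W' x)
    (hpos : ∀ x ∈ Ioo 0 (F b), 0 < W x)
    (hint : IntervalIntegrable (fun x => (W x) ^ (-(1/2) : ℝ)) volume 0 (F b)) :
    b ≤ ∫ x in (0:ℝ)..(F b), (W x) ^ (-(1/2) : ℝ) := by
  apply le_of_forall_lt_imp_le_of_dense
  intro t ht
  have mb : b ∈ Ioc 0 b := ⟨hb, le_rfl⟩
  rcases le_or_gt t 0 with h0 | h0
  · refine h0.trans (intervalIntegral.integral_nonneg_of_ae_restrict (hF.pos b mb).le ?_)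
    rw [EventuallyLE, ae_restrict_iff' measurableSet_Icc]
    have hne : ∀ᵐ x : ℝ, x ≠ F b := by simp [ae_iff]
    have hne0 : ∀ᵐ x : ℝ, x ≠ 0 := by simp [ae_iff]
    filter_upwards [hne, hne0] with x hx hx0 hm
    exact Real.rpow_nonneg (hpos x ⟨lt_of_le_of_ne hm.1 hx0.symm, lt_of_le_of_ne hm.2 hx⟩).le _
  · have hlt : F t < F b := hF.mono ⟨h0, ht.le⟩ mb ht
    exact phase_total hF hW hWc hWb hs h0 ht hlt.le
      (fun x hx => hpos x ⟨hx.1, hx.2.trans_lt hlt⟩) (fun x hx => (hpos x hx).le) hint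

lemma cbrt_facts {x : ℝ} (hx : 0 ≤ x) : ∃ t : ℝ, 0 ≤ t ∧ t = x ^ (1/3 : ℝ) ∧ t ^ 3 = x ∧ x ^ (2/3 : ℝ) = t ^ 2 ∧
    x ^ (-(1/3) : ℝ) = t⁻¹ := by
  refine ⟨x ^ (1/3 : ℝ), Real.rpow_nonneg hx _, rfl, ?_, ?_, ?_⟩
  · rw [← Real.rpow_natCast, ← Real.rpow_mul hx]; norm_num
  · rw [← Real.rpow_natCast, ← Real.rpow_mul hx]; norm_num
  · rw [← Real.rpow_neg hx]

lemma int_aux {W : ℝ → ℝ} (hWm : Measurable W) {a M κ : ℝ} (haM : a ≤ M) (hκ : 0 < κ)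
    (h : ∀ x ∈ Ioo a M, κ * (M - x) ≤ W x) :
    IntervalIntegrable (fun x => (W x) ^ (-(1/2) : ℝ)) volume a M := by
  have h1 : IntervalIntegrable (fun x : ℝ => x ^ (-(1/2) : ℝ)) volume (M - a) (M - M) :=
    intervalIntegral.intervalIntegrable_rpow' (by norm_num)
  have h2 := (h1.comp_sub_left M)
  simp only [sub_sub_cancel] at h2
  have h3 := h2.const_mul (κ ^ (-(1/2) : ℝ))
  refine h3.mono_fun (hWm.pow_const _).aestronglyMeasurable ?_
  rw [uIoc_of_le haM, EventuallyLE, ae_restrict_iff' measurableSet_Ioc]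
  have hne : ∀ᵐ x : ℝ, x ≠ M := by simp [ae_iff]
  filter_upwards [hne] with x hx hm
  have hlt : x < M := lt_of_le_of_ne hm.2 hx
  have hp : 0 < κ * (M - x) := mul_pos hκ (by linarith)
  have := h x ⟨hm.1, hlt⟩
  rw [← Real.mul_rpow hκ.le (by linarith), Real.norm_of_nonneg (Real.rpow_nonneg (hp.le.trans this) _),
    Real.norm_of_nonneg (Real.rpow_nonneg hp.le _)]
  exact Real.rpow_le_rpow_of_nonpos hp this (by norm_num)

lemma low23 {x M : ℝ} (hx : 0 ≤ x) (hxM : x ≤ M) (hM : 0 < M) :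
    (M - x) / (3 * M ^ (1/3 : ℝ)) ≤ M ^ (2/3 : ℝ) - x ^ (2/3 : ℝ) := by
  have hle : x ^ (1/3 : ℝ) ≤ M ^ (1/3 : ℝ) := Real.rpow_le_rpow hx hxM (by norm_num)
  have hTp : 0 < M ^ (1/3 : ℝ) := Real.rpow_pos_of_pos hM _
  obtain ⟨t, ht0, hte, ht3, ht2, -⟩ := cbrt_facts hx
  obtain ⟨T, hT0, hTe, hT3, hT2, -⟩ := cbrt_facts hM.le
  rw [ht2, hT2]
  rw [← hte, ← hTe] at hle
  rw [← hTe] at hTp ⊢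
  rw [div_le_iff₀ (by positivity), ← hT3, ← ht3]
  nlinarith [mul_nonneg (sub_nonneg.2 hle) (mul_nonneg ht0 hT0), mul_nonneg (sub_nonneg.2 hle) (mul_nonneg hT0 hT0), mul_nonneg (sub_nonneg.2 hle) (mul_nonneg ht0 (sub_nonneg.2 hle))]

lemma int23 {ε M : ℝ} (hε : 0 < ε) (hM : 0 < M) :
    IntervalIntegrable (fun x => (9 * ε * (M ^ (2/3 : ℝ) - x ^ (2/3 : ℝ))) ^ (-(1/2) : ℝ)) volume 0 M := by
  have hTp : 0 < M ^ (1/3 : ℝ) := Real.rpow_pos_of_pos hM _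
  apply int_aux (W := fun x => 9 * ε * (M ^ (2/3 : ℝ) - x ^ (2/3 : ℝ))) (κ := 9 * ε / (3 * M ^ (1/3 : ℝ))) _ hM.le (by positivity)
  · intro x hx
    have := mul_le_mul_of_nonneg_left (low23 hx.1.le hx.2.le hM) (show 0 ≤ 9 * ε by positivity)
    calc _ = 9 * ε * ((M - x) / (3 * M ^ (1/3 : ℝ))) := by ring
      _ ≤ _ := this
  · exact (measurable_const.sub (measurable_id.pow_const _)).const_mul _

/-- small maximum: only the Ricci bound matters -/
lemma asc_small {ε : ℝ} (hε : ε ∈ Ioo (0:ℝ) 1) (hstar : CondStar ε) {F : ℝ → ℝ} {b : ℝ}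
    (hb : 0 < b) (hF : Asc ε F b) (hM : F b ^ (2/3 : ℝ) ≤ 4 * π / (3 - 2 * ε)) : b < π ^ 2 := by
  obtain ⟨hε0, hε1⟩ := hε
  have hπ := Real.pi_pos
  have h3 : 0 < 3 - 2 * ε := by linarith
  set z := 4 * π / (3 - 2 * ε) with hz
  have hz0 : 0 < z := by positivity
  have hzz : (3 - 2 * ε) * z = 4 * π := by rw [hz]; field_simp
  set M := z ^ (3/2 : ℝ) with hMdef
  have hMp : 0 < M := Real.rpow_pos_of_pos hz0 _
  have hM23 : M ^ (2/3 : ℝ) = z := by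
    rw [hMdef, ← Real.rpow_mul hz0.le]; norm_num
  have hFb : 0 < F b := hF.pos b ⟨hb, le_rfl⟩
  have hFM : F b ≤ M := by
    have := Real.rpow_le_rpow (by positivity) hM (show (0:ℝ) ≤ 3/2 by norm_num)
    rw [← Real.rpow_mul hFb.le] at this
    norm_num at this
    exact this
  have hst := hstar M z ⟨le_rfl, by nlinarith⟩ (by
    have : M = z ^ (1/2 : ℝ) * z := by
      rw [hMdef, ← Real.rpow_add_one hz0.ne']; norm_num
    rw [this, ← hzz]; ring)
  rw [← hMdef, intervalIntegral.integral_same, add_zero, hM23] at hst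
  have hst' : ∫ x in (0:ℝ)..M, (9 * ε * (M ^ (2/3 : ℝ) - x ^ (2/3 : ℝ))) ^ (-(1/2) : ℝ) < π ^ 2 := by
    refine lt_of_eq_of_lt ?_ hst
    congr 1; ext x; congr 1
    rw [hM23]; linear_combination 9 * hzz
  refine lt_of_le_of_lt ?_ hst'
  set d := M - F b with hd
  have hd0 : 0 ≤ d := by linarith
  have hi0 := int23 hε0 hMp
  have hlt : ∀ x, 0 < x → x < M → 0 < 9 * ε * (M ^ (2/3 : ℝ) - x ^ (2/3 : ℝ)) := by
    intro x h0 h1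
    have := Real.rpow_lt_rpow h0.le h1 (show (0:ℝ) < 2/3 by norm_num)
    exact mul_pos (by linarith) (by linarith)
  have hi1 : IntervalIntegrable (fun x => (9 * ε * (M ^ (2/3 : ℝ) - x ^ (2/3 : ℝ))) ^ (-(1/2) : ℝ)) volume d M :=
    hi0.mono_set (by
      rw [uIcc_of_le hMp.le, uIcc_of_le (by linarith)]
      exact Icc_subset_Icc hd0 le_rfl)
  have hi2 := hi1.comp_add_right d
  rw [sub_self, show M - d = F b by rw [hd]; ring] at hi2
  have := phase_b (W := fun x => 9 * ε * (M ^ (2/3 : ℝ) - (x + d) ^ (2/3 : ℝ)))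
    (W' := fun x => 9 * ε * (-((2/3) * (x + d) ^ (2/3 - 1 : ℝ)))) hb hF ?_ ?_ ?_ ?_ ?_ hi2
  · refine this.trans ?_
    rw [intervalIntegral.integral_comp_add_right (fun x => (9 * ε * (M ^ (2/3 : ℝ) - x ^ (2/3 : ℝ))) ^ (-(1/2) : ℝ)) d]
    rw [zero_add, show F b + d = M by rw [hd]; ring]
    apply intervalIntegral.integral_mono_interval hd0 (by linarith) le_rfl _ hi0
    rw [EventuallyLE, ae_restrict_iff' measurableSet_Ioc]
    have hne : ∀ᵐ x : ℝ, x ≠ M := by simp [ae_iff]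
    filter_upwards [hne] with x hx hm
    exact Real.rpow_nonneg (hlt x hm.1 (lt_of_le_of_ne hm.2 hx)).le _
  · intro x hx
    have h1 : HasDerivAt (fun x : ℝ => x + d) 1 x := by simpa using (hasDerivAt_id x).add_const d
    have h2 := h1.rpow_const (p := (2/3 : ℝ)) (Or.inl (show 0 < x + d by linarith [hx.1]).ne')
    have h3 := (h2.const_sub (M ^ (2/3 : ℝ))).const_mul (9 * ε)
    simpa using h3
  · apply ContinuousOn.mul continuousOn_const
    apply ContinuousOn.sub continuousOn_const
    exact ContinuousOn.rpow_const (by fun_prop) fun x _ => Or.inr (by norm_num)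
  · rw [show F b + d = M by rw [hd]; ring]; simp
  · intro x hx
    left
    have : (x + d) ^ (2/3 - 1 : ℝ) ≤ x ^ (-(1/3) : ℝ) := by
      rw [show (2/3 - 1 : ℝ) = -(1/3) by norm_num]
      exact Real.rpow_le_rpow_of_nonpos hx.1 (by linarith) (by norm_num)
    nlinarith
  · intro x hx
    exact hlt _ (by linarith [hx.1]) (by rw [hd]; linarith [hx.2])

lemma cont_main {c : ℝ} : ContinuousOn (fun x : ℝ => 36 * π - c * x ^ (-(1/3) : ℝ) - 9 * x ^ (2/3 : ℝ)) (Ioi 0) := by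
  intro x hx
  have h1 : ContinuousAt (fun x : ℝ => x ^ (-(1/3) : ℝ)) x :=
    Real.continuousAt_rpow_const _ _ (Or.inl (ne_of_gt hx))
  have h2 : ContinuousAt (fun x : ℝ => x ^ (2/3 : ℝ)) x :=
    Real.continuousAt_rpow_const _ _ (Or.inl (ne_of_gt hx))
  exact ((continuousAt_const.sub (continuousAt_const.mul h1)).sub
    (continuousAt_const.mul h2)).continuousWithinAt

lemma deriv_main {c x : ℝ} (hx : 0 < x) :
    HasDerivAt (fun x : ℝ => 36 * π - c * x ^ (-(1/3) : ℝ) - 9 * x ^ (2/3 : ℝ))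
      ((36 * π - (36 * π - c * x ^ (-(1/3) : ℝ) - 9 * x ^ (2/3 : ℝ))) / (3 * x) - 9 * x ^ (-(1/3) : ℝ)) x := by
  have h1 : HasDerivAt (fun x : ℝ => x ^ (-(1/3) : ℝ)) (-(1/3) * x ^ (-(1/3) - 1 : ℝ)) x :=
      Real.hasDerivAt_rpow_const (Or.inl hx.ne')
  have h2 : HasDerivAt (fun x : ℝ => x ^ (2/3 : ℝ)) ((2/3) * x ^ (2/3 - 1 : ℝ)) x :=
      Real.hasDerivAt_rpow_const (Or.inl hx.ne')
  have h3 := ((h1.const_mul c).const_sub (36 * π)).fun_sub (h2.const_mul 9)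
  refine h3.congr_deriv ?_
  rw [show (2/3 - 1 : ℝ) = -(1/3) by norm_num, Real.rpow_sub_one hx.ne']
  obtain ⟨t, ht0, hte, ht3, ht2, htm⟩ := cbrt_facts hx.le
  have htp : 0 < t := by rw [hte]; exact Real.rpow_pos_of_pos hx _
  rw [ht2, htm, ← ht3]
  field_simp
  ring

/-- large maximum -/
lemma asc_large {ε : ℝ} {F : ℝ → ℝ} {b : ℝ}
    (hF : Asc ε F b) (hM : (4 * π) ^ (3/2 : ℝ) ≤ F b) {s : ℝ} (hs0 : 0 < s) (hsb : s < b)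
    (hsX : F s < (4 * π) ^ (3/2 : ℝ)) :
    s ≤ ∫ x in (0:ℝ)..(F s), (9 * 1 * (((4 * π) ^ (3/2 : ℝ)) ^ (2/3 : ℝ) - x ^ (2/3 : ℝ))) ^ (-(1/2) : ℝ) := by
  have hπ := Real.pi_pos
  set X := (4 * π) ^ (3/2 : ℝ) with hX
  have hXp : 0 < X := Real.rpow_pos_of_pos (by positivity) _
  have hX23 : X ^ (2/3 : ℝ) = 4 * π := by
    rw [hX, ← Real.rpow_mul (by positivity)]; norm_num
  have hW : ∀ x : ℝ, 9 * 1 * (X ^ (2/3 : ℝ) - x ^ (2/3 : ℝ)) =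
      36 * π - 0 * x ^ (-(1/3) : ℝ) - 9 * x ^ (2/3 : ℝ) := by
    intro x; rw [hX23]; ring
  have hlt : ∀ x, 0 < x → x < X → 0 < 9 * 1 * (X ^ (2/3 : ℝ) - x ^ (2/3 : ℝ)) := by
    intro x h0 h1
    have := Real.rpow_lt_rpow h0.le h1 (show (0:ℝ) < 2/3 by norm_num)
    linarith
  have hFs := hF.pos s ⟨hs0, hsb.le⟩
  have hi := (int23 one_pos hXp).mono_set (c := 0) (d := F s) (by
      rw [uIcc_of_le hXp.le, uIcc_of_le hFs.le]
      exact Icc_subset_Icc le_rfl hsX.le)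
  simp only [hW] at hi hlt ⊢
  refine phase_total hF (fun x hx => deriv_main hx.1) (cont_main.mono fun x hx => hx.1) ?_
    (fun x hx => Or.inr le_rfl) hs0 hsb le_rfl (fun x hx => hlt x hx.1 (hx.2.trans_lt hsX))
    (fun x hx => (hlt x hx.1 (hx.2.trans hsX)).le) hi
  have := Real.rpow_le_rpow hXp.le hM (show (0:ℝ) ≤ 2/3 by norm_num)
  rw [hX23] at this
  linarith

set_option maxHeartbeats 2000000 in
lemma asc_mid {ε : ℝ} (hε : ε ∈ Ioo (0:ℝ) 1) (hstar : CondStar ε) {F : ℝ → ℝ} {b : ℝ}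
    (hb : 0 < b) (hF : Asc ε F b) (hM : 4 * π / (3 - 2 * ε) < F b ^ (2/3 : ℝ))
    (hM2 : F b ^ (2/3 : ℝ) < 4 * π) : b < π ^ 2 := by
  obtain ⟨hε0, hε1⟩ := hε
  have hπ := Real.pi_pos
  have h3 : 0 < 3 - 2 * ε := by linarith
  have hFb : 0 < F b := hF.pos b ⟨hb, le_rfl⟩
  obtain ⟨T, -, hTe, hT3, hT2, hTm⟩ := cbrt_facts hFb.le
  have hT0 : 0 < T := by rw [hTe]; exact Real.rpow_pos_of_pos hFb _
  rw [hT2] at hM hM2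
  have hzr : (T ^ 2) ^ (1/2 : ℝ) = T := by
    rw [← Real.rpow_natCast, ← Real.rpow_mul hT0.le]; norm_num
  have hzM : (T ^ 2) ^ (3/2 : ℝ) = F b := by
    rw [← hT3, ← Real.rpow_natCast, ← Real.rpow_mul hT0.le, ← Real.rpow_natCast]; norm_num
  obtain ⟨Z, hZ0, hZ⟩ : ∃ Z : ℝ, 0 < Z ∧ (3 - 2 * ε) * Z ^ 2 = 4 * π := by
    refine ⟨√(4 * π / (3 - 2 * ε)), by positivity, ?_⟩
    rw [Real.sq_sqrt (by positivity)]; field_simp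
  have hZT : Z < T := by
    rw [div_lt_iff₀ h3] at hM
    by_contra h
    push Not at h
    have : T ^ 2 ≤ Z ^ 2 := by gcongr
    nlinarith
  set y := T * (4 * π - T ^ 2) / (2 * (1 - ε)) with hy
  have h1ε : 0 < 1 - ε := by linarith
  have hyeq : 2 * (1 - ε) * y = T * (4 * π - T ^ 2) := by rw [hy]; field_simp
  have hy0 : 0 < y := by
    have : 0 < 4 * π - T ^ 2 := by linarith
    rw [hy]; positivity
  clear_value y
  obtain ⟨τ, -, hτe, hτ3, hτ2, hτm⟩ := cbrt_facts hy0.le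
  have hτ0 : 0 < τ := by rw [hτe]; exact Real.rpow_pos_of_pos hy0 _
  have hst := hstar y (T ^ 2) ⟨hM.le, hM2⟩ (by rw [hyeq, hzr])
  rw [hzM] at hst
  have hτZ : τ < Z := by
    by_contra h
    push Not at h
    have h' : Z ^ 3 ≤ τ ^ 3 := by gcongr
    rw [hτ3] at h'
    have e : T * (4 * π - T ^ 2) = 2 * (1 - ε) * Z ^ 3 - (T - Z) * (T ^ 2 + T * Z - 2 * (1 - ε) * Z ^ 2) := by
      rw [← hZ]; ring
    have p : 0 < T ^ 2 + T * Z - 2 * (1 - ε) * Z ^ 2 := by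
      nlinarith [mul_pos hZ0 (sub_pos.2 hZT), mul_pos hT0 (sub_pos.2 hZT), mul_pos hε0 (mul_pos hZ0 hZ0)]
    nlinarith [mul_pos (sub_pos.2 hZT) p, mul_le_mul_of_nonneg_left h' h1ε.le]
  have hτT : τ < T := hτZ.trans hZT
  have hyM : y < F b := by rw [← hτ3, ← hT3]; gcongr
  set B := 9 * (T ^ 2 + T * τ + τ ^ 2) - 36 * π with hB
  have hc : 18 * (1 - ε) * y = 9 * T * (4 * π - T ^ 2) := by linear_combination 9 * hyeq
  have hBp : 0 < B := by
    have e : (T - τ) * B = 9 * (3 - 2 * ε) * τ * (Z ^ 2 - τ ^ 2) := by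
      rw [hB]
      have hyeq' := hyeq
      rw [← hτ3] at hyeq'
      linear_combination 9 * hyeq' - 9 * τ * hZ
    have : 0 < (T - τ) * B := by
      rw [e]
      have : 0 < Z ^ 2 - τ ^ 2 := by nlinarith
      positivity
    exact pos_of_mul_pos_right this (by linarith)
  set c := 18 * (1 - ε) * y with hcdef
  clear_value B c
  set W1 : ℝ → ℝ := fun x => 36 * π - 27 * (1 - ε) * y ^ (2/3 : ℝ) - 9 * ε * x ^ (2/3 : ℝ) with hW1
  set W2 : ℝ → ℝ := fun x => 36 * π - c * x ^ (-(1/3) : ℝ) - 9 * x ^ (2/3 : ℝ) with hW2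
  set W : ℝ → ℝ := fun x => if x ≤ y then W1 x else W2 x with hW
  set W2' : ℝ → ℝ := fun x => (36 * π - W2 x) / (3 * x) - 9 * x ^ (-(1/3) : ℝ) with hW2'
  set W' : ℝ → ℝ := fun x => if x ≤ y then -6 * ε * x ^ (-(1/3) : ℝ) else W2' x with hW'
  have hyy : W1 y = W2 y := by
    simp only [hW1, hW2, hcdef, hτ2, hτm]
    rw [← hτ3]; field_simp; ring
  have hyy' : -6 * ε * y ^ (-(1/3) : ℝ) = W2' y := by
    simp only [hW2', hW2, hcdef, hτ2, hτm]
    rw [← hτ3]; field_simp; ring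
  have hWle : ∀ x, x ≤ y → W x = W1 x := fun x hx => by simp only [hW, if_pos hx]
  have hWge : ∀ x, y ≤ x → W x = W2 x := fun x hx => by
    rcases eq_or_lt_of_le hx with rfl | h
    · simp only [hW, le_refl, if_true, hyy]
    · simp only [hW, if_neg (not_le.2 h)]
  have hW'ge : ∀ x, y ≤ x → W' x = W2' x := fun x hx => by
    rcases eq_or_lt_of_le hx with rfl | h
    · simp only [hW', le_refl, if_true, hyy']
    · simp only [hW', if_neg (not_le.2 h)]
  have hW'le : ∀ x, x ≤ y → W' x = -6 * ε * x ^ (-(1/3) : ℝ) := fun x hx => by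
    simp only [hW', if_pos hx]
  have hd1 : ∀ x, 0 < x → HasDerivAt W1 (-6 * ε * x ^ (-(1/3) : ℝ)) x := by
    intro x hx
    have h2 : HasDerivAt (fun x : ℝ => x ^ (2/3 : ℝ)) ((2/3) * x ^ (2/3 - 1 : ℝ)) x :=
      Real.hasDerivAt_rpow_const (Or.inl hx.ne')
    refine ((h2.const_mul (9 * ε)).const_sub (36 * π - 27 * (1 - ε) * y ^ (2/3 : ℝ))).congr_deriv ?_
    rw [show (2/3 - 1 : ℝ) = -(1/3) by norm_num]; ring
  have hd2 : ∀ x, 0 < x → HasDerivAt W2 (W2' x) x := fun x hx => deriv_main hx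
  have hWd : ∀ x, 0 < x → HasDerivAt W (W' x) x := by
    intro x hx
    rcases lt_trichotomy x y with h | h | h
    · rw [hW'le x h.le]
      refine (hd1 x hx).congr_of_eventuallyEq ?_
      filter_upwards [Iio_mem_nhds h] with u hu using hWle u (le_of_lt hu)
    · subst h
      have a : HasDerivWithinAt W (W' x) (Iic x) x := by
        rw [hW'le x le_rfl]
        exact (hd1 x hx).hasDerivWithinAt.congr (fun u hu => hWle u hu) (hWle x le_rfl)
      have a2 : HasDerivWithinAt W (W' x) (Ici x) x := by
        rw [hW'ge x le_rfl]
        exact (hd2 x hx).hasDerivWithinAt.congr (fun u hu => hWge u hu) (hWge x le_rfl)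
      have := a.union a2
      rwa [Iic_union_Ici, hasDerivWithinAt_univ] at this
    · rw [hW'ge x h.le]
      refine (hd2 x hx).congr_of_eventuallyEq ?_
      filter_upwards [Ioi_mem_nhds h] with u hu using hWge u (le_of_lt hu)
  have hW1low : ∀ x, 0 ≤ x → x ≤ y → 0 < W1 x := by
    intro x h0 hx
    have hle : x ^ (2/3 : ℝ) ≤ y ^ (2/3 : ℝ) := Real.rpow_le_rpow h0 hx (by norm_num)
    simp only [hW1]
    rw [hτ2] at hle ⊢
    have : 0 < Z ^ 2 - τ ^ 2 := by nlinarith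
    nlinarith [mul_pos h3 this, mul_le_mul_of_nonneg_left hle hε0.le]
  have hW2f : ∀ x, y ≤ x → x ≤ F b → B / (3 * T ^ 3) * (F b - x) ≤ W2 x := by
    intro x hx hxb
    have hx0 : 0 < x := hy0.trans_le hx
    obtain ⟨t, -, hte, ht3, ht2, htm⟩ := cbrt_facts hx0.le
    have ht0 : 0 < t := by rw [hte]; exact Real.rpow_pos_of_pos hx0 _
    have hτt : τ ≤ t := by
      rw [hτe, hte]; exact Real.rpow_le_rpow hy0.le hx (by norm_num)
    have htT : t ≤ T := by
      rw [hTe, hte]; exact Real.rpow_le_rpow hx0.le hxb (by norm_num)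
    have e : W2 x = (T - t) * (9 * (T ^ 2 + T * t + t ^ 2) - 36 * π) / t := by
      simp only [hW2, ht2, htm, hc]
      field_simp; ring
    rw [e, ← ht3, ← hT3]
    have hB2 : B ≤ 9 * (T ^ 2 + T * t + t ^ 2) - 36 * π := by
      rw [hB]; nlinarith
    have s1 : (T - t) * B / T ≤ (T - t) * (9 * (T ^ 2 + T * t + t ^ 2) - 36 * π) / t := by
      have hn : 0 ≤ T - t := by linarith
      have h' := mul_le_mul_of_nonneg_left hB2 hn
      have : 0 ≤ (T - t) * B := mul_nonneg hn hBp.le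
      exact div_le_div₀ (this.trans h') h' ht0 htT
    refine le_trans ?_ s1
    have s2 : T ^ 3 - t ^ 3 ≤ (T - t) * (3 * T ^ 2) := by
      nlinarith [mul_nonneg (sub_nonneg.2 htT) (mul_nonneg hT0.le (sub_nonneg.2 htT)), mul_nonneg (sub_nonneg.2 htT) (mul_nonneg ht0.le (sub_nonneg.2 htT))]
    calc B / (3 * T ^ 3) * (T ^ 3 - t ^ 3) ≤ B / (3 * T ^ 3) * ((T - t) * (3 * T ^ 2)) := by gcongr
      _ = (T - t) * B / T := by field_simp
  have hκ : 0 < B / (3 * T ^ 3) := by positivity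
  have hpos : ∀ x ∈ Ioo 0 (F b), 0 < W x := by
    intro x hx
    rcases le_or_gt x y with h | h
    · rw [hWle x h]; exact hW1low x hx.1.le h
    · rw [hWge x h.le]
      exact lt_of_lt_of_le (mul_pos hκ (by linarith [hx.2])) (hW2f x h.le hx.2.le)
  have hi1 : IntervalIntegrable (fun x => (W1 x) ^ (-(1/2) : ℝ)) volume 0 y := by
    apply ContinuousOn.intervalIntegrable_of_Icc hy0.le
    apply ContinuousOn.rpow_const
    · simp only [hW1]
      apply ContinuousOn.sub continuousOn_const
      apply ContinuousOn.mul continuousOn_const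
      exact ContinuousOn.rpow_const continuousOn_id fun x _ => Or.inr (by norm_num)
    · intro x hx; exact Or.inl (hW1low x hx.1 hx.2).ne'
  have hi2 : IntervalIntegrable (fun x => (W2 x) ^ (-(1/2) : ℝ)) volume y (F b) := by
    refine int_aux ?_ hyM.le hκ fun x hx => hW2f x hx.1.le hx.2.le
    exact (measurable_const.sub ((measurable_id.pow_const _).const_mul _)).sub
      ((measurable_id.pow_const _).const_mul _)
  have c1 : EqOn (fun x => (W1 x) ^ (-(1/2) : ℝ)) (fun x => (W x) ^ (-(1/2) : ℝ)) (uIcc 0 y) := by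
    intro x hx
    rw [uIcc_of_le hy0.le] at hx
    simp only [hWle x hx.2]
  have c2 : EqOn (fun x => (W2 x) ^ (-(1/2) : ℝ)) (fun x => (W x) ^ (-(1/2) : ℝ)) (uIcc y (F b)) := by
    intro x hx
    rw [uIcc_of_le hyM.le] at hx
    simp only [hWge x hx.1]
  have hi1' : IntervalIntegrable (fun x => (W x) ^ (-(1/2) : ℝ)) volume 0 y :=
    hi1.congr (c1.mono uIoc_subset_uIcc)
  have hi2' : IntervalIntegrable (fun x => (W x) ^ (-(1/2) : ℝ)) volume y (F b) :=
    hi2.congr (c2.mono uIoc_subset_uIcc)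
  have hfin := phase_b hb hF (fun x hx => hWd x hx.1)
    (fun x hx => (hWd x hx.1).continuousAt.continuousWithinAt) (by
      rw [hWge _ hyM.le]
      simp only [hW2, hT2, hTm, hc]
      apply le_of_eq
      field_simp; ring)
    (fun x hx => by
      rcases le_or_gt x y with h | h
      · left; rw [hW'le x h]
      · right; rw [hW'ge x h.le, hWge x h.le]) hpos (hi1'.trans hi2')
  rw [← intervalIntegral.integral_add_adjacent_intervals hi1' hi2',
    ← intervalIntegral.integral_congr c1, ← intervalIntegral.integral_congr c2] at hfin
  exact lt_of_le_of_lt hfin hst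

lemma asc_lt {ε : ℝ} (hε : ε ∈ Ioo (0:ℝ) 1) (hstar : CondStar ε) {F : ℝ → ℝ} {b : ℝ}
    (hb : 0 < b) (hF : Asc ε F b) (hM : F b < (4 * π) ^ (3/2 : ℝ)) : b < π ^ 2 := by
  rcases le_or_gt (F b ^ (2/3 : ℝ)) (4 * π / (3 - 2 * ε)) with h | h
  · exact asc_small hε hstar hb hF h
  · refine asc_mid hε hstar hb hF h ?_
    have := Real.rpow_lt_rpow (hF.pos b ⟨hb, le_rfl⟩).le hM (show (0:ℝ) < 2/3 by norm_num)
    rw [← Real.rpow_mul (by positivity)] at this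
    norm_num at this
    exact this

/-- Data of the comparison function. -/
structure Cmp (ε : ℝ) (f f1 : ℝ → ℝ) : Prop where
  mem : ∀ s ∈ Ioo (-(π ^ 2)) (π ^ 2), f s ∈ Ioc (0:ℝ) ((4 * π) ^ (3/2 : ℝ))
  d1 : ∀ s ∈ Ioo (-(π ^ 2)) (π ^ 2), HasDerivAt f (f1 s) s
  d2 : ∀ s ∈ Ioo (-(π ^ 2)) (π ^ 2), HasDerivAt f1
    (min ((36 * π - (f1 s) ^ 2) / (6 * f s) - (9/2) * (f s) ^ (-(1/3) : ℝ))
              (-3 * ε * (f s) ^ (-(1/3) : ℝ))) s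
  f0 : f 0 = (4 * π) ^ (3/2 : ℝ)
  f10 : f1 0 = 0
  lim : Tendsto f (𝓝[>] (-(π ^ 2))) (𝓝 0)

lemma cmp_left {ε : ℝ} (hε : ε ∈ Ioo (0:ℝ) 1) {f f1 : ℝ → ℝ} (h : Cmp ε f f1) {r : ℝ}
    (hr : r ∈ Ioc (-(π ^ 2)) 0) :
    ∫ x in (0:ℝ)..(f r), (9 * 1 * (((4 * π) ^ (3/2 : ℝ)) ^ (2/3 : ℝ) - x ^ (2/3 : ℝ))) ^ (-(1/2) : ℝ)
      = r + π ^ 2 := by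
  obtain ⟨hε0, hε1⟩ := hε
  have hπ := Real.pi_pos
  have hπ2 : 0 < π ^ 2 := by positivity
  set X := (4 * π) ^ (3/2 : ℝ) with hX
  have hXp : 0 < X := Real.rpow_pos_of_pos (by positivity) _
  have hX23 : X ^ (2/3 : ℝ) = 4 * π := by
    rw [hX, ← Real.rpow_mul (by positivity)]; norm_num
  have hsub : Ioc (-(π ^ 2)) 0 ⊆ Ioo (-(π ^ 2)) (π ^ 2) := fun s hs => ⟨hs.1, by linarith [hs.2]⟩
  set G1 : ℝ → ℝ := fun s => (36 * π - (f1 s) ^ 2) / (6 * f s) - (9/2) * (f s) ^ (-(1/3) : ℝ) with hG1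
  set G2 : ℝ → ℝ := fun s => -3 * ε * (f s) ^ (-(1/3) : ℝ) with hG2
  have hd2 : ∀ s ∈ Ioo (-(π ^ 2)) (π ^ 2), HasDerivAt f1 (min (G1 s) (G2 s)) s := h.d2
  -- f1 > 0
  have hf1anti : StrictAntiOn f1 (Ioc (-(π ^ 2)) 0) := by
    apply strictAntiOn_of_deriv_neg (convex_Ioc _ _)
    · exact fun s hs => (hd2 s (hsub hs)).continuousAt.continuousWithinAt
    · rw [interior_Ioc]
      intro s hs
      rw [(hd2 s (hsub ⟨hs.1, hs.2.le⟩)).deriv]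
      refine lt_of_le_of_lt (min_le_right _ _) ?_
      have := Real.rpow_pos_of_pos (h.mem s (hsub ⟨hs.1, hs.2.le⟩)).1 (-(1/3))
      simp only [hG2]
      nlinarith [mul_pos hε0 this]
  have m0 : (0:ℝ) ∈ Ioc (-(π ^ 2)) 0 := ⟨by linarith, le_rfl⟩
  have hf1pos : ∀ s ∈ Ioo (-(π ^ 2)) 0, 0 < f1 s := fun s hs => by
    have := hf1anti ⟨hs.1, hs.2.le⟩ m0 hs.2
    rwa [h.f10] at this
  have hfmono : StrictMonoOn f (Ioc (-(π ^ 2)) 0) := by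
    apply strictMonoOn_of_deriv_pos (convex_Ioc _ _)
    · exact fun s hs => (h.d1 s (hsub hs)).continuousAt.continuousWithinAt
    · rw [interior_Ioc]
      intro s hs
      rw [(h.d1 s (hsub ⟨hs.1, hs.2.le⟩)).deriv]
      exact hf1pos s hs
  -- mass
  set m : ℝ → ℝ := fun s => (f s) ^ (1/3 : ℝ) * (36 * π - (f1 s) ^ 2) - 9 * f s with hm
  have hmd : ∀ s ∈ Ioo (-(π ^ 2)) (π ^ 2), HasDerivAt m
      (2 * (f s) ^ (1/3 : ℝ) * f1 s * (G1 s - min (G1 s) (G2 s))) s := by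
    intro s hs
    have hfp := (h.mem s hs).1
    have a1 := (h.d1 s hs).rpow_const (p := (1/3 : ℝ)) (Or.inl hfp.ne')
    have a2 := ((hd2 s hs).fun_pow 2).const_sub (36 * π)
    have a3 := (a1.fun_mul a2).fun_sub ((h.d1 s hs).const_mul 9)
    refine a3.congr_deriv ?_
    generalize min (G1 s) (G2 s) = g
    simp only [hG1]
    rw [Real.rpow_sub_one hfp.ne']
    obtain ⟨t, ht0, hte, ht3, ht2, htm⟩ := cbrt_facts hfp.le
    have htp : 0 < t := by rw [hte]; exact Real.rpow_pos_of_pos hfp _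
    rw [← hte, htm, ← ht3]
    field_simp
    push_cast
    ring
  have hm0 : m 0 = 0 := by
    simp only [hm, h.f0, h.f10]
    obtain ⟨t, ht0, hte, ht3, ht2, htm⟩ := cbrt_facts hXp.le
    rw [← hte]
    rw [hX23] at ht2
    linear_combination 9 * t * ht2 + 9 * ht3 
  have hmc : ContinuousOn m (Ioc (-(π ^ 2)) 0) :=
    fun s hs => (hmd s (hsub hs)).continuousAt.continuousWithinAt
  have hmle : ∀ s ∈ Ioc (-(π ^ 2)) 0, m s ≤ 0 := by
    have : MonotoneOn m (Ioc (-(π ^ 2)) 0) := by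
      apply monotoneOn_of_deriv_nonneg (convex_Ioc _ _) hmc
      · rw [interior_Ioc]
        exact fun s hs => (hmd s (hsub ⟨hs.1, hs.2.le⟩)).differentiableAt.differentiableWithinAt
      · rw [interior_Ioc]
        intro s hs
        rw [(hmd s (hsub ⟨hs.1, hs.2.le⟩)).deriv]
        have h1 := Real.rpow_pos_of_pos (h.mem s (hsub ⟨hs.1, hs.2.le⟩)).1 (1/3)
        have h2 := hf1pos s hs
        have h3 : 0 ≤ G1 s - min (G1 s) (G2 s) := sub_nonneg.2 (min_le_left _ _)
        positivity
    intro s hs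
    have := this hs m0 hs.2
    rwa [hm0] at this
  have hmin : ∀ s ∈ Ioc (-(π ^ 2)) 0, min (G1 s) (G2 s) = G1 s := by
    intro s hs
    apply min_eq_left
    have hfp := (h.mem s (hsub hs)).1
    have hml := hmle s hs
    obtain ⟨t, ht0, hte, ht3, ht2, htm⟩ := cbrt_facts hfp.le
    have htp : 0 < t := by rw [hte]; exact Real.rpow_pos_of_pos hfp _
    simp only [hm] at hml
    simp only [hG1, hG2]
    rw [← hte, ← ht3] at hml
    rw [htm, ← ht3]
    have h36 : 36 * π - f1 s ^ 2 ≤ 9 * t ^ 2 := by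
      by_contra hcon
      push Not at hcon
      have := mul_lt_mul_of_pos_left hcon htp
      nlinarith
    have : (36 * π - f1 s ^ 2) / (6 * t ^ 3) ≤ (9 * t ^ 2) / (6 * t ^ 3) := by gcongr
    have e : (9 * t ^ 2) / (6 * t ^ 3) = 3/2 * t⁻¹ := by field_simp; norm_num
    have hti : 0 < t⁻¹ := inv_pos.2 htp
    nlinarith
  have hmzero : ∀ s ∈ Ioo (-(π ^ 2)) 0, m s = 0 := by
    have : AntitoneOn m (Ioc (-(π ^ 2)) 0) := by
      apply antitoneOn_of_deriv_nonpos (convex_Ioc _ _) hmc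
      · rw [interior_Ioc]
        exact fun s hs => (hmd s (hsub ⟨hs.1, hs.2.le⟩)).differentiableAt.differentiableWithinAt
      · rw [interior_Ioc]
        intro s hs
        rw [(hmd s (hsub ⟨hs.1, hs.2.le⟩)).deriv, hmin s ⟨hs.1, hs.2.le⟩]
        simp
    intro s hs
    have h1 := this ⟨hs.1, hs.2.le⟩ m0 hs.2.le
    rw [hm0] at h1
    exact le_antisymm (hmle s ⟨hs.1, hs.2.le⟩) h1
  have hsq : ∀ s ∈ Ioo (-(π ^ 2)) 0, f1 s ^ 2 = 9 * 1 * (X ^ (2/3 : ℝ) - f s ^ (2/3 : ℝ)) := by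
    intro s hs
    have hfp := (h.mem s (hsub ⟨hs.1, hs.2.le⟩)).1
    have hml := hmzero s hs
    obtain ⟨t, ht0, hte, ht3, ht2, htm⟩ := cbrt_facts hfp.le
    have htp : 0 < t := by rw [hte]; exact Real.rpow_pos_of_pos hfp _
    simp only [hm] at hml
    rw [← hte, ← ht3] at hml
    rw [hX23, ht2]
    have : t * (36 * π - f1 s ^ 2 - 9 * t ^ 2) = 0 := by linear_combination hml
    rcases mul_eq_zero.1 this with h | h
    · exact absurd h htp.ne'
    · linarith
  -- integrate
  set Q : ℝ → ℝ := fun x => (9 * 1 * (X ^ (2/3 : ℝ) - x ^ (2/3 : ℝ))) ^ (-(1/2) : ℝ) with hQ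
  have hQi : IntervalIntegrable Q volume 0 X := int23 one_pos hXp
  set T0 : ℝ → ℝ := fun x => ∫ u in (0:ℝ)..x, Q u with hT0
  have hT0c : ContinuousOn T0 (Icc 0 X) := by
    have := intervalIntegral.continuousOn_primitive_interval (μ := volume) (f := Q)
      (a := 0) (b := X) (by
        rw [uIcc_of_le hXp.le, integrableOn_Icc_iff_integrableOn_Ioc]
        exact (intervalIntegrable_iff_integrableOn_Ioc_of_le hXp.le).1 hQi)
    rwa [uIcc_of_le hXp.le] at this
  have hlt : ∀ x, 0 < x → x < X → 0 < 9 * 1 * (X ^ (2/3 : ℝ) - x ^ (2/3 : ℝ)) := by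
    intro x h0 h1
    have := Real.rpow_lt_rpow h0.le h1 (show (0:ℝ) < 2/3 by norm_num)
    linarith
  have hQc : ContinuousOn Q (Ioo 0 X) := by
    apply ContinuousOn.rpow_const
    · apply ContinuousOn.mul continuousOn_const
      apply ContinuousOn.sub continuousOn_const
      exact ContinuousOn.rpow_const continuousOn_id fun x _ => Or.inr (by norm_num)
    · intro x hx; exact Or.inl (hlt x hx.1 hx.2).ne'
  have hT0d : ∀ x ∈ Ioo 0 X, HasDerivAt T0 (Q x) x := by
    intro x hx
    have hnb : Ioo 0 X ∈ 𝓝 x := Ioo_mem_nhds hx.1 hx.2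
    apply intervalIntegral.integral_hasDerivAt_right
    · exact hQi.mono_set (by
        rw [uIcc_of_le hXp.le, uIcc_of_le hx.1.le]
        exact Icc_subset_Icc le_rfl hx.2.le)
    · exact ContinuousOn.stronglyMeasurableAtFilter_nhdsWithin
        hQc measurableSet_Ioo x |> fun h => by
          rwa [isOpen_Ioo.nhdsWithin_eq hx] at h
    · exact hQc.continuousAt hnb
  set g : ℝ → ℝ := fun s => T0 (f s) - s with hg
  have hgc : ContinuousOn g (Ioc (-(π ^ 2)) 0) := by
    apply ContinuousOn.sub _ continuousOn_id
    apply hT0c.comp (fun s hs => (h.d1 s (hsub hs)).continuousAt.continuousWithinAt)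
    intro s hs
    exact ⟨(h.mem s (hsub hs)).1.le, (h.mem s (hsub hs)).2⟩
  have hgd : ∀ s ∈ Ioo (-(π ^ 2)) 0, HasDerivAt g 0 s := by
    intro s hs
    have hfs : f s ∈ Ioo 0 X := ⟨(h.mem s (hsub ⟨hs.1, hs.2.le⟩)).1, by
      have := hfmono ⟨hs.1, hs.2.le⟩ m0 hs.2
      rwa [h.f0] at this⟩
    have a := HasDerivAt.comp s (hT0d _ hfs) (h.d1 s (hsub ⟨hs.1, hs.2.le⟩))
    refine (a.fun_sub (hasDerivAt_id' s)).congr_deriv ?_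
    have hp := hf1pos s hs
    have : Q (f s) = (f1 s)⁻¹ := by
      simp only [hQ]
      rw [← hsq s hs, ← Real.rpow_natCast, ← Real.rpow_mul hp.le]
      norm_num
      rw [Real.rpow_neg_one]
    rw [this, inv_mul_cancel₀ hp.ne', sub_self]
  have hconst : ∀ s ∈ Ioc (-(π ^ 2)) 0, g s = g 0 := by
    have h1 : MonotoneOn g (Ioc (-(π ^ 2)) 0) := by
      apply monotoneOn_of_deriv_nonneg (convex_Ioc _ _) hgc
      · rw [interior_Ioc]
        exact fun s hs => (hgd s hs).differentiableAt.differentiableWithinAt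
      · rw [interior_Ioc]
        intro s hs
        rw [(hgd s hs).deriv]
    have h2 : AntitoneOn g (Ioc (-(π ^ 2)) 0) := by
      apply antitoneOn_of_deriv_nonpos (convex_Ioc _ _) hgc
      · rw [interior_Ioc]
        exact fun s hs => (hgd s hs).differentiableAt.differentiableWithinAt
      · rw [interior_Ioc]
        intro s hs
        rw [(hgd s hs).deriv]
    exact fun s hs => le_antisymm (h1 hs m0 hs.2) (h2 hs m0 hs.2)
  have hev : ∀ᶠ s in 𝓝[>] (-(π ^ 2)), s ∈ Ioc (-(π ^ 2)) 0 := by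
    filter_upwards [Ioo_mem_nhdsGT (show -(π ^ 2) < 0 by linarith)] with s hs using ⟨hs.1, hs.2.le⟩
  have hglim : Tendsto g (𝓝[>] (-(π ^ 2))) (𝓝 (π ^ 2)) := by
    have h1 : Tendsto f (𝓝[>] (-(π ^ 2))) (𝓝[Icc 0 X] 0) := by
      rw [tendsto_nhdsWithin_iff]
      refine ⟨h.lim, ?_⟩
      filter_upwards [hev] with s hs
      exact ⟨(h.mem s (hsub hs)).1.le, (h.mem s (hsub hs)).2⟩
    have h2 : Tendsto (fun s => T0 (f s)) (𝓝[>] (-(π ^ 2))) (𝓝 (T0 0)) :=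
      (hT0c 0 ⟨le_rfl, hXp.le⟩).tendsto.comp h1
    have h3 : Tendsto (fun s : ℝ => s) (𝓝[>] (-(π ^ 2))) (𝓝 (-(π ^ 2))) :=
      tendsto_id.mono_left nhdsWithin_le_nhds
    have := h2.sub h3
    have e : T0 0 = 0 := by simp [hT0]
    rw [e, zero_sub, neg_neg] at this
    exact this
  have hg0 : g 0 = π ^ 2 := by
    refine tendsto_nhds_unique (tendsto_const_nhds.congr' ?_) hglim
    filter_upwards [hev] with s hs using (hconst s hs).symm
  have := hconst r hr
  rw [hg0] at this
  change T0 (f r) = r + π ^ 2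
  simp only [hg] at this
  linarith

lemma bar_of {ε : ℝ} {A : ℝ → ℝ} {s₀ δ : ℝ} (hδ : 0 < δ) {u : ℝ → ℝ}
    (hApos : ∀ᶠ s in 𝓝 s₀, 0 < A s)
    (hu : ContDiffOn ℝ 2 u (Set.Ioo (s₀ - δ) (s₀ + δ)))
    (hup : ∀ s ∈ Set.Ioo (s₀ - δ) (s₀ + δ), 0 < u s)
    (hu0 : u s₀ = A s₀)
    (huA : ∀ s ∈ Set.Ioo (s₀ - δ) (s₀ + δ), A s ≤ u s)
    (h2 : deriv (deriv u) s₀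
        ≤ min (4 * π / (u s₀) ^ 2 - 3 * (deriv u s₀) ^ 2 / (4 * u s₀) - 3 / (u s₀))
              (-(deriv u s₀) ^ 2 / (2 * u s₀) - 2 * ε / (u s₀))) :
    Bar ε (fun s => (A s) ^ (3/2 : ℝ)) s₀ := by
  have hm : s₀ ∈ Ioo (s₀ - δ) (s₀ + δ) := ⟨by linarith, by linarith⟩
  have hnb : ∀ s ∈ Ioo (s₀ - δ) (s₀ + δ), Ioo (s₀ - δ) (s₀ + δ) ∈ 𝓝 s := fun s hs =>
    isOpen_Ioo.mem_nhds hs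
  have hd1 : ∀ s ∈ Ioo (s₀ - δ) (s₀ + δ), HasDerivAt u (deriv u s) s := fun s hs =>
    ((hu.contDiffAt (hnb s hs)).differentiableAt (by norm_num)).hasDerivAt
  have hd2 : HasDerivAt (deriv u) (deriv (deriv u) s₀) s₀ := by
    have h1 : ContDiffOn ℝ 1 (deriv u) (Ioo (s₀ - δ) (s₀ + δ)) :=
      hu.deriv_of_isOpen isOpen_Ioo (by norm_num)
    exact ((h1.contDiffAt (hnb s₀ hm)).differentiableAt (by norm_num)).hasDerivAt
  have hupos := hup s₀ hm
  have b1 := h2.trans (min_le_left _ _)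
  have b2 := h2.trans (min_le_right _ _)
  refine ⟨fun s => (u s) ^ (3/2 : ℝ), fun s => (3/2) * (u s) ^ (1/2 : ℝ) * deriv u s,
    (3/2) * (deriv u s₀ * (1/2) * (u s₀) ^ (-(1/2) : ℝ)) * deriv u s₀
      + (3/2) * (u s₀) ^ (1/2 : ℝ) * deriv (deriv u) s₀, ?_, ?_, ?_, ?_, ?_, ?_⟩
  · filter_upwards [hnb s₀ hm] with s hs
    have := (hd1 s hs).rpow_const (p := (3/2 : ℝ)) (Or.inl (hup s hs).ne')
    refine this.congr_deriv ?_
    norm_num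
    ring
  · have := (((hd1 s₀ hm).rpow_const (p := (1/2 : ℝ)) (Or.inl hupos.ne')).const_mul (3/2)).fun_mul hd2
    refine this.congr_deriv ?_
    norm_num
  · simp only [hu0]
  · filter_upwards [hnb s₀ hm, hApos] with s hs hA
    exact Real.rpow_le_rpow hA.le (huA s hs) (by norm_num)
  all_goals
    simp only [← hu0]
    set a := (u s₀) ^ (1/2 : ℝ) with ha
    have hap : 0 < a := Real.rpow_pos_of_pos hupos _
    have e1 : u s₀ = a ^ 2 := by
      rw [ha, ← Real.rpow_natCast, ← Real.rpow_mul hupos.le]; norm_num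
    have e2 : (u s₀) ^ (-(1/2) : ℝ) = a⁻¹ := by rw [Real.rpow_neg hupos.le]
    have e3 : (u s₀) ^ (3/2 : ℝ) = a ^ 3 := by
      rw [ha, ← Real.rpow_natCast, ← Real.rpow_mul hupos.le]; norm_num
    have e4 : (a ^ 3) ^ (-(1/3) : ℝ) = a⁻¹ := by
      rw [← Real.rpow_natCast, ← Real.rpow_mul hap.le, ← Real.rpow_neg_one]; norm_num
    rw [e3, e4, e2]
    rw [e1] at b1 b2
    generalize deriv (deriv u) s₀ = q at *
    generalize deriv u s₀ = p at *
    clear_value a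
  · have := mul_le_mul_of_nonneg_left b1 (by positivity : 0 ≤ (3/2) * a)
    refine (add_le_add_right this _).trans (le_of_eq ?_)
    field_simp
    ring
  · have := mul_le_mul_of_nonneg_left b2 (by positivity : 0 ≤ (3/2) * a)
    refine (add_le_add_right this _).trans (le_of_eq ?_)
    field_simp
    ring

lemma Cmp.reflect {ε : ℝ} {f f1 : ℝ → ℝ} (h : Cmp ε f f1)
    (hl : Tendsto f (𝓝[<] (π ^ 2)) (𝓝 0)) : Cmp ε (fun r => f (-r)) (fun r => -f1 (-r)) := by
  have hneg : ∀ s ∈ Ioo (-(π ^ 2)) (π ^ 2), -s ∈ Ioo (-(π ^ 2)) (π ^ 2) := fun s hs =>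
    ⟨by linarith [hs.2], by linarith [hs.1]⟩
  refine ⟨fun s hs => h.mem _ (hneg s hs), fun s hs => ?_, fun s hs => ?_, ?_, ?_, ?_⟩
  · have := (h.d1 _ (hneg s hs)).comp s (hasDerivAt_neg s)
    refine this.congr_deriv ?_
    ring
  · have := ((h.d2 _ (hneg s hs)).comp s (hasDerivAt_neg s)).neg
    refine this.congr_deriv ?_
    simp only [neg_sq]
    ring
  · simpa using h.f0
  · simpa using h.f10
  · refine hl.comp ?_
    have := tendsto_neg_nhdsGT (a := -(π ^ 2))
    rwa [neg_neg] at this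

lemma half {ε : ℝ} (hε : ε ∈ Ioo (0:ℝ) 1) {f f1 F : ℝ → ℝ} (h : Cmp ε f f1)
    (hl : Tendsto f (𝓝[<] (π ^ 2)) (𝓝 0)) {b s : ℝ} (hF : Asc ε F b)
    (hM : (4 * π) ^ (3/2 : ℝ) ≤ F b) (hs0 : 0 < s) (hsb : s < b) (hsL : s < 2 * π ^ 2) :
    f (s - π ^ 2) ≤ F s := by
  have hr : s - π ^ 2 ∈ Ioo (-(π ^ 2)) (π ^ 2) := ⟨by linarith, by linarith⟩
  have hfm := h.mem _ hr
  by_contra hcon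
  push Not at hcon
  have hsX : F s < (4 * π) ^ (3/2 : ℝ) := hcon.trans_le hfm.2
  have h1 := asc_large hF hM hs0 hsb hsX
  have hFs : 0 < F s := hF.pos s ⟨hs0, hsb.le⟩
  have hT : ∫ x in (0:ℝ)..(f (s - π ^ 2)), (9 * 1 * (((4 * π) ^ (3/2 : ℝ)) ^ (2/3 : ℝ) - x ^ (2/3 : ℝ))) ^ (-(1/2) : ℝ) ≤ s := by
    rcases le_total (s - π ^ 2) 0 with h0 | h0
    · rw [cmp_left hε h ⟨hr.1, h0⟩]; linarith
    · have := cmp_left hε (h.reflect hl) (r := -(s - π ^ 2)) ⟨by linarith [hr.2], by linarith⟩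
      simp only [neg_neg] at this
      rw [this]; linarith
  set X := (4 * π) ^ (3/2 : ℝ) with hX
  have hXp : 0 < X := hFs.trans hsX
  have hint := int23 (ε := 1) one_pos hXp
  have i1 := hint.mono_set (a := 0) (b := X) (c := 0) (d := F s) (by
    rw [uIcc_of_le hFs.le, uIcc_of_le hXp.le]; exact Icc_subset_Icc_right hsX.le)
  have i2 := hint.mono_set (a := 0) (b := X) (c := F s) (d := f (s - π ^ 2)) (by
    rw [uIcc_of_le hcon.le, uIcc_of_le hXp.le]; exact Icc_subset_Icc hFs.le hfm.2)
  have hadd := intervalIntegral.integral_add_adjacent_intervals i1 i2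
  have hpos : 0 < ∫ x in (F s)..(f (s - π ^ 2)), (9 * 1 * (X ^ (2/3 : ℝ) - x ^ (2/3 : ℝ))) ^ (-(1/2) : ℝ) := by
    apply intervalIntegral.intervalIntegral_pos_of_pos_on i2 _ hcon
    intro x hx
    have : x ^ (2/3 : ℝ) < X ^ (2/3 : ℝ) :=
      Real.rpow_lt_rpow (hFs.trans hx.1).le (hx.2.trans_le hfm.2) (by norm_num)
    exact Real.rpow_pos_of_pos (by linarith) _
  linarith

lemma asc_of_max {ε : ℝ} (hε : 0 < ε) {F : ℝ → ℝ} {L δ t : ℝ}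
    (hpos : ∀ s ∈ Ioo 0 L, 0 < F s) (hc : ContinuousOn F (Ioo 0 L))
    (hb : ∀ s ∈ Ioo 0 L, Bar ε F s) (hδ : 0 < δ) (hδt : δ < t) (htL : t < L)
    (hmax : ∀ s ∈ Icc δ t, F s ≤ F t) : Asc ε F t := by
  have hno : ∀ a d, 0 < a → d < L → ∀ s ∈ Ioo a d, ¬ IsLocalMin F s := by
    intro a d ha hd s hs hm
    have hsI : s ∈ Ioo 0 L := ⟨ha.trans hs.1, hs.2.trans hd⟩
    exact Bar.no_min hε (k := 0) (hb s hsI) (hpos s hsI) (by simpa using hm)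
  have hq : ∀ a c d, 0 < a → a < c → c < d → d < L → min (F a) (F d) < F c := by
    intro a c d ha hac hcd hd
    exact strict_quasi hac hcd (hc.mono fun x hx => ⟨ha.trans_le hx.1, hx.2.trans_lt hd⟩)
      (hno a d ha hd)
  have hlt : ∀ a, 0 < a → a < t → F a < F t := by
    intro a ha hat
    by_contra hcon
    push Not at hcon
    have h1 : max a δ < t := max_lt hat hδt
    obtain ⟨c, hc1, hc2⟩ := exists_between h1
    have := hq a c t ha ((le_max_left _ _).trans_lt hc1) hc2 htL
    rw [min_eq_right hcon] at this
    exact absurd (hmax c ⟨((le_max_right _ _).trans_lt hc1).le, hc2.le⟩) (not_le.2 this)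
  refine ⟨fun s hs => hpos s ⟨hs.1, hs.2.trans_lt htL⟩,
    hc.mono fun s hs => ⟨hs.1, hs.2.trans_lt htL⟩, ?_, ?_, fun s hs => hb s ⟨hs.1, hs.2.trans htL⟩⟩
  · intro a ha c hc' hac
    rcases hc'.2.lt_or_eq with h | h
    · have := hq a c t ha.1 hac h htL
      rwa [min_eq_left (hlt a ha.1 (hac.trans h)).le] at this
    · rw [h]; exact hlt a ha.1 (h ▸ hac)
  · intro a c d ha hac hcd hd
    exact concave_of_bar hε hpos hc hb ha hac hcd (hd.trans_lt htL)

lemma main_cmp {ε : ℝ} (hε : ε ∈ Ioo (0:ℝ) 1) (hstar : CondStar ε) {f f1 F : ℝ → ℝ}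
    (h : Cmp ε f f1) (hl : Tendsto f (𝓝[<] (π ^ 2)) (𝓝 0))
    (hpos : ∀ s ∈ Ioo 0 (2 * π ^ 2), 0 < F s) (hc : ContinuousOn F (Ioo 0 (2 * π ^ 2)))
    (hb : ∀ s ∈ Ioo 0 (2 * π ^ 2), Bar ε F s) {s : ℝ} (hs : s ∈ Ioo 0 (2 * π ^ 2)) :
    f (s - π ^ 2) ≤ F s := by
  have hπ2 : 0 < π ^ 2 := by have := Real.pi_pos; positivity
  obtain ⟨hs0, hsL⟩ := hs
  obtain ⟨δ, hδ0, hδ⟩ : ∃ δ, 0 < δ ∧ δ < min s (2 * π ^ 2 - s) :=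
    exists_between (lt_min hs0 (by linarith))
  have hδs := hδ.trans_le (min_le_left _ _)
  have hδL := hδ.trans_le (min_le_right _ _)
  have hsub : Icc δ (2 * π ^ 2 - δ) ⊆ Ioo 0 (2 * π ^ 2) := fun x hx =>
    ⟨hδ0.trans_le hx.1, by linarith [hx.2]⟩
  obtain ⟨t, ht, hmax⟩ := isCompact_Icc.exists_isMaxOn (s := Icc δ (2 * π ^ 2 - δ))
    ⟨s, hδs.le, by linarith⟩ (hc.mono hsub)
  have hmax' : ∀ x ∈ Icc δ (2 * π ^ 2 - δ), F x ≤ F t := fun x hx => hmax hx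
  have htI := hsub ht
  have hfs := h.mem (s - π ^ 2) ⟨by linarith, by linarith⟩
  have A1 : δ < t → Asc ε F t := fun hh =>
    asc_of_max hε.1 hpos hc hb hδ0 hh htI.2 fun x hx => hmax' x ⟨hx.1, hx.2.trans ht.2⟩
  have A2 : t < 2 * π ^ 2 - δ → Asc ε (fun x => F (2 * π ^ 2 - x)) (2 * π ^ 2 - t) := by
    intro hh
    have hmem : ∀ x ∈ Ioo 0 (2 * π ^ 2), 2 * π ^ 2 - x ∈ Ioo 0 (2 * π ^ 2) := fun x hx =>
      ⟨by linarith [hx.2], by linarith [hx.1]⟩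
    refine asc_of_max (L := 2 * π ^ 2) (δ := δ) hε.1 (fun x hx => hpos _ (hmem x hx))
      (hc.comp (by fun_prop) hmem) (fun x hx => (hb _ (hmem x hx)).reflect) hδ0 (by linarith)
      (by linarith [htI.1]) ?_
    intro x hx
    have e : 2 * π ^ 2 - (2 * π ^ 2 - t) = t := by ring
    rw [e]
    exact hmax' _ ⟨by linarith [hx.2, ht.1], by linarith [hx.1]⟩
  have e : 2 * π ^ 2 - (2 * π ^ 2 - t) = t := by ring
  rcases lt_or_ge (F t) ((4 * π) ^ (3/2 : ℝ)) with hM | hM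
  · exfalso
    have B1 : δ < t → t < π ^ 2 := fun hh => asc_lt hε hstar htI.1 (A1 hh) hM
    have B2 : t < 2 * π ^ 2 - δ → 2 * π ^ 2 - t < π ^ 2 := fun hh =>
      asc_lt hε hstar (by linarith [htI.2]) (A2 hh) (by simpa only [e] using hM)
    rcases lt_or_ge t (π ^ 2) with h1 | h1
    · have := B2 (by linarith); linarith
    · have := B1 (by linarith); linarith
  · rcases lt_trichotomy s t with h1 | h1 | h1
    · exact half hε h hl (A1 (by linarith)) hM hs0 h1 hsL
    · rw [← h1] at hM; exact hfs.2.trans hM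
    · have hl' : Tendsto (fun r => f (-r)) (𝓝[<] (π ^ 2)) (𝓝 0) := by
        refine h.lim.comp ?_
        exact tendsto_neg_nhdsLT
      have := half (s := 2 * π ^ 2 - s) hε (h.reflect hl) hl' (A2 (by linarith))
        (by simpa only [e] using hM) (by linarith) (by linarith) (by linarith)
      rwa [show -(2 * π ^ 2 - s - π ^ 2) = s - π ^ 2 by ring,
        show 2 * π ^ 2 - (2 * π ^ 2 - s) = s by ring] at this

/-- ODE comparison: if `ε ∈ (0,1)` satisfies (★), `A : (0, 2π²) → (0, ∞)` is continuous and
has the second-variation barrier property, and `f` is the comparison function on `(−π², π²)`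
(i.e. a C² solution of `f'' = min{(36π − (f')²)/(6f) − (9/2) f^{−1/3}, −3ε f^{−1/3}}` with
`f(0) = (4π)^{3/2}`, `f'(0) = 0` and `f → 0` at `±π²`), then `A(s)^{3/2} ≥ f(s − π²)` on
`(0, 2π²)`. -/
theorem stmt_13 (ε : ℝ) (hε : ε ∈ Set.Ioo (0:ℝ) 1) (hstar : CondStar ε)
    (A : ℝ → ℝ)
    (hApos : ∀ s ∈ Set.Ioo (0:ℝ) (2 * π ^ 2), 0 < A s)
    (hAcont : ContinuousOn A (Set.Ioo (0:ℝ) (2 * π ^ 2)))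
    (hbarrier : ∀ s₀ ∈ Set.Ioo (0:ℝ) (2 * π ^ 2), ∃ δ > (0:ℝ), ∃ u : ℝ → ℝ,
      ContDiffOn ℝ 2 u (Set.Ioo (s₀ - δ) (s₀ + δ)) ∧
      (∀ s ∈ Set.Ioo (s₀ - δ) (s₀ + δ), 0 < u s) ∧
      u s₀ = A s₀ ∧
      (∀ s ∈ Set.Ioo (s₀ - δ) (s₀ + δ), A s ≤ u s) ∧
      deriv (deriv u) s₀
        ≤ min (4 * π / (u s₀) ^ 2 - 3 * (deriv u s₀) ^ 2 / (4 * u s₀) - 3 / (u s₀))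
              (-(deriv u s₀) ^ 2 / (2 * u s₀) - 2 * ε / (u s₀)))
    (f : ℝ → ℝ)
    (hfmem : ∀ s ∈ Set.Ioo (-(π ^ 2)) (π ^ 2), f s ∈ Set.Ioc (0:ℝ) ((4 * π) ^ (3/2 : ℝ)))
    (hfC2 : ContDiffOn ℝ 2 f (Set.Ioo (-(π ^ 2)) (π ^ 2)))
    (hfode : ∀ s ∈ Set.Ioo (-(π ^ 2)) (π ^ 2),
      deriv (deriv f) s
        = min ((36 * π - (deriv f s) ^ 2) / (6 * f s) - (9/2) * (f s) ^ (-(1/3) : ℝ))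
              (-3 * ε * (f s) ^ (-(1/3) : ℝ)))
    (hf0 : f 0 = (4 * π) ^ (3/2 : ℝ)) (hf0' : deriv f 0 = 0)
    (hflim₁ : Filter.Tendsto f
      (nhdsWithin (π ^ 2) (Set.Ioo (-(π ^ 2)) (π ^ 2))) (nhds 0))
    (hflim₂ : Filter.Tendsto f
      (nhdsWithin (-(π ^ 2)) (Set.Ioo (-(π ^ 2)) (π ^ 2))) (nhds 0)) :
    ∀ s ∈ Set.Ioo (0:ℝ) (2 * π ^ 2), f (s - π ^ 2) ≤ (A s) ^ (3/2 : ℝ) := by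
  have hIoo : ∀ s ∈ Ioo (-(π ^ 2)) (π ^ 2), Ioo (-(π ^ 2)) (π ^ 2) ∈ 𝓝 s := fun s hs =>
    isOpen_Ioo.mem_nhds hs
  have hπ2 : 0 < π ^ 2 := by have := Real.pi_pos; positivity
  have hlt : -(π ^ 2) < π ^ 2 := by linarith
  rw [nhdsWithin_Ioo_eq_nhdsLT hlt] at hflim₁
  rw [nhdsWithin_Ioo_eq_nhdsGT hlt] at hflim₂
  have hC : Cmp ε f (deriv f) := by
    refine ⟨hfmem, fun s hs => ?_, fun s hs => ?_, hf0, hf0', hflim₂⟩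
    · exact ((hfC2.contDiffAt (hIoo s hs)).differentiableAt (by norm_num)).hasDerivAt
    · have h1 : ContDiffOn ℝ 1 (deriv f) (Ioo (-(π ^ 2)) (π ^ 2)) :=
        hfC2.deriv_of_isOpen isOpen_Ioo (by norm_num)
      rw [← hfode s hs]
      exact ((h1.contDiffAt (hIoo s hs)).differentiableAt (by norm_num)).hasDerivAt
  intro s hs
  refine main_cmp (F := fun s => (A s) ^ (3/2 : ℝ)) hε hstar hC hflim₁
    (fun s hs => Real.rpow_pos_of_pos (hApos s hs) _)
    (hAcont.rpow_const fun s hs => Or.inl (hApos s hs).ne') (fun s₀ hs₀ => ?_) hs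
  obtain ⟨δ, hδ, u, hu, hup, hu0, huA, h2⟩ := hbarrier s₀ hs₀
  refine bar_of hδ ?_ hu hup hu0 huA h2
  filter_upwards [isOpen_Ioo.mem_nhds hs₀] with s hs
  exact hApos s hs
end

section
/- Let n ≥ 3 be an integer and c > 0 a real number, and define the polynomial p(t) = −c − 1 + ((n−1)/2) t² + ((n−1)(n+1)/24) t⁴ + ((n−1)(n+1)(n+3)/240) t⁶. Then for every t ∈ ℝ, (1 − t²) p''(t) − (n−1) t p'(t) + (n−1) p(t) = −(n−1)c − ((n−1)(n+1)(n+3)(n+5)/48) t⁶; in particular this quantity is strictly negative for all t. -/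
/-- The polynomial `p(t) = −c − 1 + ((n−1)/2)t² + ((n−1)(n+1)/24)t⁴ + ((n−1)(n+1)(n+3)/240)t⁶`
from the Brendle–Marques–Neves construction. -/
noncomputable def pPoly (n : ℕ) (c : ℝ) (t : ℝ) : ℝ :=
  -c - 1 + (((n:ℝ) - 1) / 2) * t ^ 2 + (((n:ℝ) - 1) * ((n:ℝ) + 1) / 24) * t ^ 4
    + (((n:ℝ) - 1) * ((n:ℝ) + 1) * ((n:ℝ) + 3) / 240) * t ^ 6

/-- For `n ≥ 3` and `c > 0`:
`(1 − t²) p''(t) − (n−1) t p'(t) + (n−1) p(t) = −(n−1)c − ((n−1)(n+1)(n+3)(n+5)/48) t⁶ < 0`. -/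
theorem stmt_15 (n : ℕ) (hn : 3 ≤ n) (c : ℝ) (hc : 0 < c) (t : ℝ) :
    (1 - t ^ 2) * deriv (deriv (pPoly n c)) t - ((n:ℝ) - 1) * t * deriv (pPoly n c) t
        + ((n:ℝ) - 1) * pPoly n c t
      = -((n:ℝ) - 1) * c
        - (((n:ℝ) - 1) * ((n:ℝ) + 1) * ((n:ℝ) + 3) * ((n:ℝ) + 5) / 48) * t ^ 6 ∧
    (1 - t ^ 2) * deriv (deriv (pPoly n c)) t - ((n:ℝ) - 1) * t * deriv (pPoly n c) t
        + ((n:ℝ) - 1) * pPoly n c t < 0 := by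
  have h1 : ∀ s : ℝ, HasDerivAt (pPoly n c) (((n:ℝ) - 1) * s + (((n:ℝ) - 1) * ((n:ℝ) + 1) / 6) * s ^ 3
      + (((n:ℝ) - 1) * ((n:ℝ) + 1) * ((n:ℝ) + 3) / 40) * s ^ 5) s := by
    intro s
    have h := ((((hasDerivAt_pow 2 s).const_mul (((n:ℝ) - 1) / 2)).const_add (-c - 1)).add
      ((hasDerivAt_pow 4 s).const_mul (((n:ℝ) - 1) * ((n:ℝ) + 1) / 24))).add
      ((hasDerivAt_pow 6 s).const_mul (((n:ℝ) - 1) * ((n:ℝ) + 1) * ((n:ℝ) + 3) / 240))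
    refine HasDerivAt.congr_deriv (f := pPoly n c) h ?_
    norm_num
    ring
  have e1 : deriv (pPoly n c) = fun s => ((n:ℝ) - 1) * s + (((n:ℝ) - 1) * ((n:ℝ) + 1) / 6) * s ^ 3
      + (((n:ℝ) - 1) * ((n:ℝ) + 1) * ((n:ℝ) + 3) / 40) * s ^ 5 := funext fun s => (h1 s).deriv
  have e2 : deriv (deriv (pPoly n c)) t = ((n:ℝ) - 1) + (((n:ℝ) - 1) * ((n:ℝ) + 1) / 2) * t ^ 2
      + (((n:ℝ) - 1) * ((n:ℝ) + 1) * ((n:ℝ) + 3) / 8) * t ^ 4 := by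
    rw [e1]
    have h := (((hasDerivAt_id t).const_mul ((n:ℝ) - 1)).add
      ((hasDerivAt_pow 3 t).const_mul (((n:ℝ) - 1) * ((n:ℝ) + 1) / 6))).add
      ((hasDerivAt_pow 5 t).const_mul (((n:ℝ) - 1) * ((n:ℝ) + 1) * ((n:ℝ) + 3) / 40))
    refine Eq.trans (HasDerivAt.deriv h) ?_
    norm_num
    ring
  have key : (1 - t ^ 2) * deriv (deriv (pPoly n c)) t - ((n:ℝ) - 1) * t * deriv (pPoly n c) t
        + ((n:ℝ) - 1) * pPoly n c t
      = -((n:ℝ) - 1) * c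
        - (((n:ℝ) - 1) * ((n:ℝ) + 1) * ((n:ℝ) + 3) * ((n:ℝ) + 5) / 48) * t ^ 6 := by
    rw [e2, e1]
    simp only [pPoly]
    ring
  refine ⟨key, ?_⟩
  rw [key]
  have hn' : (3:ℝ) ≤ n := by exact_mod_cast hn
  have hm : 0 < (n:ℝ) - 1 := by linarith
  have ha : 0 < ((n:ℝ) - 1) * c := mul_pos hm hc
  have hb : 0 ≤ (((n:ℝ) - 1) * ((n:ℝ) + 1) * ((n:ℝ) + 3) * ((n:ℝ) + 5) / 48) * t ^ 6 := by
    have : 0 ≤ t ^ 6 := by positivity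
    positivity
  linarith
end

section
/- Let n ≥ 3 be an integer. For every sufficiently small c > 0, with p(t) = −c − 1 + ((n−1)/2) t² + ((n−1)(n+1)/24) t⁴ + ((n−1)(n+1)(n+3)/240) t⁶, one has ∫_{S^{n−1}} ( (1 − x_n²) p'(x_n)² − (n−1) p(x_n)² ) dσ(x) > 0, where the integral is taken with respect to the surface measure σ on the unit sphere S^{n−1} ⊂ ℝⁿ. -/
open Real MeasureTheory

open Metric in
lemma hemi_lt_top {E : Type*} [NormedAddCommGroup E] [InnerProductSpace ℝ E]
    [FiniteDimensional ℝ E] [MeasurableSpace E] [BorelSpace E] (d : ℕ)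
    (hd : Module.finrank ℝ E = d + 1) (v : E) (hv : ‖v‖ = 1) :
    (μH[(d:ℝ)] : Measure E) {x | x ∈ sphere (0:E) 1 ∧ inner ℝ v x ≤ 0} < ⊤ := by
  have : Fact (Module.finrank ℝ E = d + 1) := ⟨hd⟩
  have hv0 : v ≠ 0 := by intro h; simp [h] at hv
  have hF : Module.finrank ℝ (ℝ ∙ v)ᗮ = d := Submodule.finrank_orthogonal_span_singleton hv0
  have hc : ContDiff ℝ 1 (fun w : (ℝ ∙ v)ᗮ => stereoInvFunAux v (w : E)) :=
    contDiff_stereoInvFunAux.comp (ℝ ∙ v)ᗮ.subtypeL.contDiff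
  obtain ⟨K, hK⟩ := hc.contDiffOn.exists_lipschitzOnWith (s := closedBall 0 2) one_ne_zero
    (convex_closedBall _ _) (isCompact_closedBall _ _)
  have h1 := hK.hausdorffMeasure_image_le (d := d) (by positivity)
  have h2 : (μH[(d:ℝ)] : Measure (ℝ ∙ v)ᗮ) (closedBall 0 2) < ⊤ := by
    have := isAddHaarMeasure_hausdorffMeasure (E := (ℝ ∙ v)ᗮ)
    rw [hF] at this
    exact (isCompact_closedBall _ _).measure_lt_top
  refine lt_of_le_of_lt (measure_mono ?_) (lt_of_le_of_lt h1 ?_)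
  · rintro x ⟨hx, hx'⟩
    have hxn : ‖x‖ = 1 := by simpa using hx
    have hne : x ≠ v := by
      rintro rfl
      rw [real_inner_self_eq_norm_sq, hv] at hx'
      norm_num at hx'
    refine ⟨stereoToFun v x, ?_, ?_⟩
    · rw [mem_closedBall_zero_iff, stereoToFun_apply, norm_smul]
      have ha : ‖2 / (1 - innerSL ℝ v x)‖ ≤ 2 := by
        rw [innerSL_apply_apply, Real.norm_of_nonneg (by apply div_nonneg <;> linarith),
          div_le_iff₀ (by linarith)]
        linarith
      have hb := (ℝ ∙ v)ᗮ.norm_orthogonalProjectionOnto_apply_le x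
      rw [hxn] at hb
      nlinarith [norm_nonneg (2 / (1 - innerSL ℝ v x)), norm_nonneg ((ℝ ∙ v)ᗮ.orthogonalProjectionOnto x)]
    · have := stereo_left_inv hv (x := ⟨x, hx⟩) hne
      exact congrArg Subtype.val this
  · exact ENNReal.mul_lt_top (ENNReal.rpow_lt_top_of_nonneg (by positivity) (by simp)) h2

open Metric in
lemma sphere_lt_top {E : Type*} [NormedAddCommGroup E] [InnerProductSpace ℝ E]
    [FiniteDimensional ℝ E] [MeasurableSpace E] [BorelSpace E] (d : ℕ)
    (hd : Module.finrank ℝ E = d + 1) (v : E) (hv : ‖v‖ = 1) :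
    (μH[(d:ℝ)] : Measure E) (sphere (0:E) 1) < ⊤ := by
  have h1 := hemi_lt_top d hd v hv
  have h2 := hemi_lt_top d hd (-v) (by simpa using hv)
  refine lt_of_le_of_lt (measure_mono ?_) (measure_union_lt_top h1 h2)
  intro x hx
  rcases le_total (inner ℝ v x) 0 with h | h
  · exact Or.inl ⟨hx, h⟩
  · exact Or.inr ⟨hx, by rw [inner_neg_left]; linarith⟩

open Metric in
lemma sphere_pos {E : Type*} [NormedAddCommGroup E] [InnerProductSpace ℝ E]
    [FiniteDimensional ℝ E] [MeasurableSpace E] [BorelSpace E] (d : ℕ)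
    (hd : Module.finrank ℝ E = d + 1) (v : E) (hv : ‖v‖ = 1) :
    0 < (μH[(d:ℝ)] : Measure E) (sphere (0:E) 1) := by
  have : Fact (Module.finrank ℝ E = d + 1) := ⟨hd⟩
  have hv0 : v ≠ 0 := by intro h; simp [h] at hv
  have hF : Module.finrank ℝ (ℝ ∙ v)ᗮ = d := Submodule.finrank_orthogonal_span_singleton hv0
  have h2 : 0 < (μH[(d:ℝ)] : Measure (ℝ ∙ v)ᗮ) (ball 0 1) := by
    have := isAddHaarMeasure_hausdorffMeasure (E := (ℝ ∙ v)ᗮ)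
    rw [hF] at this
    exact measure_ball_pos _ _ one_pos
  have hL : LipschitzWith 1 (fun x : E => (ℝ ∙ v)ᗮ.orthogonalProjectionOnto x) := by
    refine LipschitzWith.of_dist_le_mul fun x y => ?_
    rw [dist_eq_norm, dist_eq_norm, ← map_sub]
    simpa using (ℝ ∙ v)ᗮ.norm_orthogonalProjectionOnto_apply_le (x - y)
  have h1 := hL.hausdorffMeasure_image_le (d := d) (by positivity) (sphere (0:E) 1)
  simp only [ENNReal.coe_one, ENNReal.one_rpow, one_mul] at h1
  refine lt_of_lt_of_le h2 (le_trans (measure_mono ?_) h1)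
  intro w hw
  have hw1 : ‖w‖ < 1 := by simpa using hw
  refine ⟨(w : E) + √(1 - ‖w‖^2) • v, ?_, ?_⟩
  · have hin : inner ℝ (w : E) v = 0 :=
      (Submodule.mem_orthogonal_singleton_iff_inner_left).1 w.2
    have h3 : ‖(w : E) + √(1 - ‖w‖^2) • v‖ ^ 2 = 1 := by
      rw [norm_add_sq_real, inner_smul_right, hin, norm_smul, hv, Submodule.coe_norm, mul_one,
        Real.norm_eq_abs, sq_abs, Real.sq_sqrt]
      · ring
      · have := norm_nonneg (w : E)
        rw [← Submodule.coe_norm] at *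
        nlinarith
    rw [mem_sphere_zero_iff_norm]
    have := norm_nonneg ((w : E) + √(1 - ‖w‖^2) • v)
    nlinarith
  · have hvz : (ℝ ∙ v)ᗮ.orthogonalProjectionOnto v = 0 := by
      apply Submodule.orthogonalProjectionOnto_orthogonal_apply_eq_zero
      exact Submodule.mem_span_singleton_self v
    simp [hvz]

/-- rotation invariance -/
lemma rot_inv {E : Type*} [NormedAddCommGroup E] [InnerProductSpace ℝ E]
    [FiniteDimensional ℝ E] [MeasurableSpace E] [BorelSpace E] (d : ℝ)
    (u w : E) (h : ‖u‖ = ‖w‖) (f : ℝ → ℝ) :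
    ∫ x in Metric.sphere (0:E) 1, f (inner ℝ u x) ∂μH[d]
      = ∫ x in Metric.sphere (0:E) 1, f (inner ℝ w x) ∂μH[d] := by
  set R := (ℝ ∙ (u - w))ᗮ.reflection with hR
  have hRu : R u = w := Submodule.reflection_sub h
  have hmp : MeasurePreserving R (μH[d] : Measure E) μH[d] :=
    R.toIsometryEquiv.measurePreserving_hausdorffMeasure d
  have hmp' := hmp.restrict_preimage (s := Metric.sphere (0:E) 1) Metric.isClosed_sphere.measurableSet
  have hpre : R ⁻¹' Metric.sphere (0:E) 1 = Metric.sphere (0:E) 1 := by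
    ext x; simp
  rw [hpre] at hmp'
  rw [← hmp'.integral_comp R.toHomeomorph.measurableEmbedding]
  congr 1
  ext x
  rw [← R.inner_map_map u, hRu, hR, Submodule.reflection_reflection]

lemma coeff_two_lemma (k : ℕ) (A : ℕ → ℝ) (M : ℝ)
    (h : ∀ t : ℝ, ∑ j ∈ Finset.range (2*k+1), t ^ j * A j = (1 + t^2)^k * M) (hk : 1 ≤ k) :
    A 2 = k * M := by
  have : (∑ j ∈ Finset.range (2*k+1), Polynomial.X ^ j * Polynomial.C (A j))
      = Polynomial.expand ℝ 2 ((1 + Polynomial.X)^k) * Polynomial.C M := by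
    apply Polynomial.funext
    intro t
    have h1 := h t
    simp only [mul_comm (_ ^ _) (A _)] at h1
    simpa [Polynomial.eval_finsetSum] using h1
  have h2 := congrArg (fun p => Polynomial.coeff p 2) this
  simp only [Polynomial.finsetSum_coeff, Polynomial.coeff_mul_C, Polynomial.coeff_X_pow] at h2
  have h3 : (Polynomial.expand ℝ 2 ((1 + Polynomial.X)^k)).coeff 2 = k := by
    have := Polynomial.coeff_expand_mul (R := ℝ) (p := 2) (by norm_num) ((1 + Polynomial.X)^k) 1
    rw [one_mul] at this
    rw [this, Polynomial.coeff_one_add_X_pow]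
    simp
  rw [h3] at h2
  rw [← h2]
  simp only [ite_mul, one_mul, zero_mul]
  rw [Finset.sum_ite_eq]
  simp; omega

lemma mom_rec (n : ℕ) (ν : Measure (EuclideanSpace ℝ (Fin n)))
    (hint : ∀ f : EuclideanSpace ℝ (Fin n) → ℝ, Continuous f → Integrable f ν)
    (hsph : ∀ᵐ x ∂ν, ‖x‖ = 1)
    (hrot : ∀ (u w : EuclideanSpace ℝ (Fin n)) (f : ℝ → ℝ), ‖u‖ = ‖w‖ →
      ∫ x, f (inner ℝ u x) ∂ν = ∫ x, f (inner ℝ w x) ∂ν)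
    (l : Fin n) (k : ℕ) :
    (2 * (k:ℝ) + 1) * ∫ x, x l ^ (2*k) ∂ν = (n + 2 * (k:ℝ)) * ∫ x, x l ^ (2*(k+1)) ∂ν := by
  have key : ∀ i : Fin n, i ≠ l →
      (2 * (k:ℝ) + 1) * ∫ x, x l ^ (2*k) * x i ^ 2 ∂ν = ∫ x, x l ^ (2*(k+1)) ∂ν := by
    intro i hi
    have := coeff_two_lemma (k+1)
      (fun j => ((2*(k+1)).choose j : ℝ) * ∫ x, x l ^ (2*(k+1) - j) * x i ^ j ∂ν)
      (∫ x, x l ^ (2*(k+1)) ∂ν) ?_ (by omega)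
    · have hch : (((2*(k+1)).choose 2 : ℕ) : ℝ) = (k+1) * (2*k+1) := by
        rw [Nat.cast_choose_two]; push_cast; ring
      simp only [hch, show 2*(k+1) - 2 = 2 * k by omega] at this
      push_cast at this
      have hk : (k:ℝ) + 1 ≠ 0 := by positivity
      apply mul_left_cancel₀ hk
      linarith
    · intro t
      set w : EuclideanSpace ℝ (Fin n) := EuclideanSpace.single l 1 + t • EuclideanSpace.single i 1
        with hw
      have hwn : ‖w‖ ^ 2 = 1 + t^2 := by
        rw [hw, norm_add_sq_real, norm_smul, inner_smul_right]
        simp [EuclideanSpace.inner_single_left, hi.symm]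
      have hwi : ∀ x, inner ℝ w x = t * x i + x l := by
        intro x
        rw [hw, inner_add_left, inner_smul_left]
        simp [EuclideanSpace.inner_single_left]; ring
      have h1 := hrot w (‖w‖ • EuclideanSpace.single l 1) (fun y => y ^ (2*(k+1)))
        (by simp [norm_smul])
      have h2 : ∀ x : EuclideanSpace ℝ (Fin n), inner ℝ (‖w‖ • EuclideanSpace.single l (1:ℝ)) x ^ (2*(k+1))
          = (1+t^2)^(k+1) * x l ^ (2*(k+1)) := by
        intro x
        rw [inner_smul_left, mul_pow, pow_mul ((starRingEnd ℝ) ‖w‖)]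
        simp only [conj_trivial, hwn, EuclideanSpace.inner_single_left, map_one, one_mul]
      simp only [h2, hwi, integral_const_mul] at h1
      rw [← h1]
      simp_rw [add_pow (t * _)]
      rw [integral_finsetSum _ (fun j _ => hint _ (by fun_prop))]
      refine Finset.sum_congr rfl fun j _ => ?_
      rw [← integral_const_mul, ← integral_const_mul]
      congr 1; ext x; ring
  have hsum : ∑ i, ∫ x, x l ^ (2*k) * x i ^ 2 ∂ν = ∫ x, x l ^ (2*k) ∂ν := by
    rw [← integral_finsetSum _ (fun j _ => hint _ (by fun_prop))]
    apply integral_congr_ae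
    filter_upwards [hsph] with x hx
    have : ∑ i, x i ^ 2 = 1 := by
      have := EuclideanSpace.norm_sq_eq x
      rw [hx] at this
      simpa using this.symm
    rw [← Finset.mul_sum, this, mul_one]
  have hl : ∫ x, x l ^ (2*k) * x l ^ 2 ∂ν = ∫ x, x l ^ (2*(k+1)) ∂ν := by
    congr 1; ext x; ring
  rw [← Finset.add_sum_erase _ _ (Finset.mem_univ l), hl] at hsum
  rw [← hsum, mul_add, Finset.mul_sum,
    Finset.sum_congr rfl (fun i hi => key i (Finset.ne_of_mem_erase hi))]
  have hn : 1 ≤ n := by have := l.2; omega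
  simp [Finset.card_erase_of_mem, Nat.cast_sub hn]
  ring

/-- For `n ≥ 3` and all sufficiently small `c > 0`,
`∫_{S^{n−1}} ((1 − x_n²) p'(x_n)² − (n−1) p(x_n)²) dσ(x) > 0`, where the integral is with
respect to the surface ((n−1)-dimensional Hausdorff) measure on the unit sphere
`S^{n−1} ⊂ ℝⁿ`. -/
theorem stmt_16 (n : ℕ) (hn : 3 ≤ n) :
    ∃ c₀ > (0:ℝ), ∀ c : ℝ, 0 < c → c < c₀ →
      0 < ∫ x in Metric.sphere (0 : EuclideanSpace ℝ (Fin n)) 1,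
            ((1 - (x ⟨n - 1, by omega⟩) ^ 2) * (deriv (pPoly n c) (x ⟨n - 1, by omega⟩)) ^ 2
              - ((n:ℝ) - 1) * (pPoly n c (x ⟨n - 1, by omega⟩)) ^ 2)
          ∂μH[(n:ℝ) - 1] := by
  set l : Fin n := ⟨n - 1, by omega⟩ with hl
  set ν : Measure (EuclideanSpace ℝ (Fin n)) :=
    (μH[(n:ℝ) - 1]).restrict (Metric.sphere (0 : EuclideanSpace ℝ (Fin n)) 1) with hν
  have hcast : (n:ℝ) - 1 = ((n - 1 : ℕ) : ℝ) := by
    rw [Nat.cast_sub (by omega)]; simp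
  have hdim : Module.finrank ℝ (EuclideanSpace ℝ (Fin n)) = (n - 1) + 1 := by
    rw [finrank_euclideanSpace_fin]; omega
  have hone : ‖(EuclideanSpace.single l (1:ℝ) : EuclideanSpace ℝ (Fin n))‖ = 1 := by simp
  have htop := sphere_lt_top (n - 1) hdim _ hone
  have hpos := sphere_pos (n - 1) hdim _ hone
  rw [← hcast] at htop hpos
  have hfin : IsFiniteMeasure ν := ⟨by rw [hν, Measure.restrict_apply_univ]; exact htop⟩
  have hint : ∀ f : EuclideanSpace ℝ (Fin n) → ℝ, Continuous f → Integrable f ν := fun f hf =>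
    hf.continuousOn.integrableOn_of_subset_isCompact (isCompact_sphere _ _)
      Metric.isClosed_sphere.measurableSet subset_rfl htop.ne
  have hsph : ∀ᵐ x ∂ν, ‖x‖ = 1 := by
    filter_upwards [ae_restrict_mem Metric.isClosed_sphere.measurableSet] with x hx
    simpa using hx
  have hrec := mom_rec n ν hint hsph (fun u w f h => rot_inv _ u w h f) l
  set m : ℕ → ℝ := fun k => ∫ x, x l ^ (2*k) ∂ν with hm
  have hrec' : ∀ k : ℕ, (2 * (k:ℝ) + 1) * m k = (n + 2 * (k:ℝ)) * m (k+1) := hrec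
  have hm0 : 0 < m 0 := by
    simp only [hm, mul_zero, pow_zero, integral_const, smul_eq_mul, mul_one, hν]
    rw [measureReal_restrict_apply_univ]
    exact ENNReal.toReal_pos hpos.ne' htop.ne
  have hn3 : (3:ℝ) ≤ n := by exact_mod_cast hn
  have hmpos : ∀ k, 0 < m k := by
    intro k
    induction k with
    | zero => exact hm0
    | succ k ih =>
      have h1 := hrec' k
      have h2 : 0 < (n + 2 * (k:ℝ)) * m (k+1) := by rw [← h1]; positivity
      exact (pos_iff_pos_of_mul_pos h2).1 (by positivity)
  set N : ℝ := (n:ℝ) - 1 with hN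
  set a : ℝ := N / 2 with ha
  set b : ℝ := N * ((n:ℝ) + 1) / 24 with hb
  set d : ℝ := N * ((n:ℝ) + 1) * ((n:ℝ) + 3) / 240 with hd
  set C : ℝ → Fin 7 → ℝ := fun c => ![-N * (c+1)^2, 4*a^2 + 2*N*(c+1)*a,
    16*a*b - 4*a^2 - N*(a^2 - 2*(c+1)*b), 16*b^2+24*a*d-16*a*b-N*(2*a*b-2*(c+1)*d),
    48*b*d-16*b^2-24*a*d-N*(b^2+2*a*d), 36*d^2-48*b*d-2*N*b*d, -36*d^2-N*d^2] with hC
  set g : ℝ → ℝ := fun c => ∑ k : Fin 7, C c k * m k with hg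
  have hder : ∀ c t, deriv (pPoly n c) t = 2*a*t + 4*b*t^3 + 6*d*t^5 := by
    intro c t
    have h1 := (((((hasDerivAt_id t).pow 2).const_mul a).const_add (-c-1)).add
      (((hasDerivAt_id t).pow 4).const_mul b)).add (((hasDerivAt_id t).pow 6).const_mul d)
    have h2 : HasDerivAt (pPoly n c) (2*a*t + 4*b*t^3 + 6*d*t^5) t := by
      refine HasDerivAt.congr_deriv (f := pPoly n c) h1 ?_
      simp only [id]
      norm_num
      ring
    exact h2.deriv
  have hI : ∀ c, ∫ x, ((1 - (x l) ^ 2) * (deriv (pPoly n c) (x l)) ^ 2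
              - N * (pPoly n c (x l)) ^ 2) ∂ν = g c := by
    intro c
    have h1 : ∀ x : EuclideanSpace ℝ (Fin n), ((1 - (x l) ^ 2) * (deriv (pPoly n c) (x l)) ^ 2
              - N * (pPoly n c (x l)) ^ 2) = ∑ k : Fin 7, C c k * x l ^ (2 * (k:ℕ)) := by
      intro x
      have h2 : pPoly n c (x l) = -c - 1 + a * x l ^ 2 + b * x l ^ 4 + d * x l ^ 6 := rfl
      rw [hder, h2]
      simp only [hC, Fin.sum_univ_succ, Fin.sum_univ_zero]
      simp
      ring
    simp_rw [h1]
    rw [integral_finsetSum _ (fun j _ => hint _ (by fun_prop))]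
    simp only [integral_const_mul, hg, hm]
  have hgc : Continuous g := by
    simp only [hg, hC, Fin.sum_univ_succ, Fin.sum_univ_zero]
    simp
    fun_prop
  have hg0 : 0 < g 0 := by
    have e5 := hrec' 5
    have e4 := hrec' 4
    have e3 := hrec' 3
    have e2 := hrec' 2
    have e1 := hrec' 1
    have e0 := hrec' 0
    norm_num at e0 e1 e2 e3 e4 e5
    have hm6 := hmpos 6
    obtain ⟨q, hq, hnq⟩ : ∃ q : ℝ, 0 ≤ q ∧ (n:ℝ) = q + 3 := ⟨n - 3, by linarith, by ring⟩
    have f5 : m 5 = (n + 10) / 11 * m 6 := by linarith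
    have f4 : m 4 = (n + 8) / 9 * m 5 := by linarith
    have f3 : m 3 = (n + 6) / 7 * m 4 := by linarith
    have f2 : m 2 = (n + 4) / 5 * m 3 := by linarith
    have f1 : m 1 = (n + 2) / 3 * m 2 := by linarith
    have f0 : m 0 = n * m 1 := by linarith
    have hP : g 0 = (5024/3465 + 95176/10395*q + 2129/210*q^2 + 64717/13860*q^3
      + 40589/36960*q^4 + 3433/24640*q^5 + 367/40320*q^6 + 641/2661120*q^7) * m 6 := by
      simp only [hg, hC, Fin.sum_univ_succ, Fin.sum_univ_zero]
      simp
      rw [f0, f1, f2, f3, f4, f5, hd, hb, ha, hN, hnq]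
      ring
    rw [hP]
    positivity
  have hev : ∀ᶠ c in nhds (0:ℝ), 0 < g c := hgc.continuousAt.eventually (lt_mem_nhds hg0)
  obtain ⟨ε, hε, hball⟩ := Metric.eventually_nhds_iff.1 hev
  refine ⟨ε, hε, fun c hc hcε => ?_⟩
  rw [hI c]
  exact hball (by rw [dist_zero_right, Real.norm_of_nonneg hc.le]; exact hcε)
end
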